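/- arXiv:math/0107044 — 4 statements merged into one kernel-verified Lean document; each statement's English description precedes it below -/
import Mathlib

section
/- The number of permutations of [n] avoiding the generalized pattern 2-13 equals the n-th Catalan number C_n = (1/(n+1))·binom(2n, n). -/
def contains213 {n : ℕ} (π : Equiv.Perm (Fin n)) : Prop :=
  ∃ i j : ℕ, ∃ (_ : i < j) (hj : j + 1 < n),
    π ⟨j, by omega⟩ < π ⟨i, by omega⟩ ∧ π ⟨i, by omega⟩ < π ⟨j + 1, hj⟩

/-! A permutation contains 2-13 if and only if it contains the classical pattern 213: if
`a_j < a_i < a_k` with `i < j < k`, then somewhere between positions `j` and `k` two adjacent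
entries cross the value `a_i`. A word `a :: t` with distinct letters avoids 213 if and only if
`t = u ++ v`, where `u` avoids 213 and has all letters above `a`, and `v` avoids 213 and has all
letters below `a`. Summing over the first letter, the number of avoiding words on a finite set
satisfies Segner's recurrence for the Catalan numbers. -/

open Finset

theorem filter_append_filter_not_of_pairwise {α : Type*} (p : α → Prop) [DecidablePred p]
    {l : List α} (h : l.Pairwise fun x y ↦ p y → p x) :
    l.filter p ++ l.filter (¬ p ·) = l := by
  induction h with
  | nil => rfl
  | @cons b t hb _ ih =>
    by_cases hpb : p b
    · simpa [hpb] using ih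
    · have hnone : ∀ x ∈ t, ¬ p x := fun x hx hpx ↦ hpb (hb x hx hpx)
      have hnil : t.filter p = [] := List.filter_eq_nil_iff.2 (by simpa using hnone)
      have hself : t.filter (¬ p ·) = t := List.filter_eq_self.2 (by simpa using hnone)
      rw [List.filter_cons_of_neg (by simpa), List.filter_cons_of_pos (by simpa), hnil, hself,
        List.nil_append]

theorem sum_card_filter_lt_card_filter_gt {α M : Type*} [LinearOrder α] [AddCommMonoid M]
    (s : Finset α) (f : ℕ → ℕ → M) :
    ∑ a ∈ s, f #{x ∈ s | x < a} #{x ∈ s | a < x} = ∑ i : Fin #s, f i (#s - 1 - i) := by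
  set e : Fin #s ↪o α := s.orderEmbOfFin rfl
  have hs : univ.map e.toEmbedding = s := s.map_orderEmbOfFin_univ rfl
  have hcard (p : α → Prop) [DecidablePred p] : #{x ∈ s | p x} = #{i | p (e i)} := by
    calc #{x ∈ s | p x} = #{x ∈ univ.map e.toEmbedding | p x} := by rw [hs]
      _ = #{i | p (e i)} := by rw [filter_map, card_map]; rfl
  have hlt (i : Fin #s) : #{x ∈ s | x < e i} = i := by simp [hcard, filter_gt_eq_Iio]
  have hgt (i : Fin #s) : #{x ∈ s | e i < x} = #s - 1 - i := by simp [hcard, filter_lt_eq_Ioi]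
  calc ∑ a ∈ s, f #{x ∈ s | x < a} #{x ∈ s | a < x}
      = ∑ a ∈ univ.map e.toEmbedding, f #{x ∈ s | x < a} #{x ∈ s | a < x} := by rw [hs]
    _ = ∑ i : Fin #s, f i (#s - 1 - i) := by simp [hlt, hgt]

section LinearOrder

variable {α : Type*} [LinearOrder α]

/-- Avoidance of the classical pattern 213 by a word: no three letters, in this order but not
necessarily adjacent, are order isomorphic to 213. -/
def Avoids213 (l : List α) : Prop :=
  l.Triplewise fun x y z ↦ ¬ (y < x ∧ x < z)

namespace Avoids213

theorem filter {l : List α} (h : Avoids213 l) (p : α → Bool) : Avoids213 (l.filter p) := by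
  induction h with
  | nil => exact .nil
  | @cons a t hat _ ih =>
    rw [List.filter_cons]
    split
    · exact .cons (hat.filter p) ih
    · exact ih

theorem cons_append {a : α} {u v : List α} (hu : Avoids213 u) (hv : Avoids213 v)
    (hau : ∀ x ∈ u, a < x) (hva : ∀ y ∈ v, y < a) : Avoids213 (a :: (u ++ v)) := by
  have hvu : ∀ x ∈ u, ∀ y ∈ v, y < x := fun x hx y hy ↦ (hva y hy).trans (hau x hx)
  refine .cons ?_ (List.triplewise_append.2 ⟨hu, hv, fun x hx ↦ ?_, fun y hy ↦ ?_⟩)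
  · refine List.pairwise_append.2 ⟨?_, ?_, fun x hx _ _ h ↦ (hau x hx).not_gt h.1⟩
    · exact List.pairwise_of_forall_mem_list fun x hx _ _ h ↦ (hau x hx).not_gt h.1
    · exact List.pairwise_of_forall_mem_list fun _ _ y hy h ↦ (hva y hy).not_gt h.2
  · exact List.pairwise_of_forall_mem_list fun _ _ y hy h ↦ (hvu x hx y hy).not_gt h.2
  · exact List.pairwise_of_forall_mem_list fun x hx _ _ h ↦ (hvu x hx y hy).not_gt h.2

theorem filter_gt_append_filter_lt {a : α} {t : List α} (h : Avoids213 (a :: t)) (ha : a ∉ t) :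
    t.filter (a < ·) ++ t.filter (· < a) = t := by
  have hne : ∀ x ∈ t, x ≠ a := fun x hx hxa ↦ ha (hxa ▸ hx)
  have hpair : t.Pairwise fun x y ↦ a < y → a < x :=
    (List.triplewise_cons.1 h).1.imp_of_mem fun hx _ hxy hay ↦
      (hne _ hx).lt_or_gt.resolve_left fun hxa ↦ hxy ⟨hxa, hay⟩
  have hlt : t.filter (· < a) = t.filter (¬ a < ·) :=
    List.filter_congr fun x hx ↦ by simp [(hne x hx).le_iff_lt]
  rw [hlt, filter_append_filter_not_of_pairwise _ hpair]

end Avoids213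

open Classical in
/-- The arrangements of the elements of `s`, each used exactly once, that avoid 213. -/
noncomputable def avoiders213 (s : Finset α) : Finset (List α) :=
  {l ∈ ⟨s.val.lists, Multiset.lists_nodup_finset s⟩ | Avoids213 l}

theorem mem_avoiders213 {s : Finset α} {l : List α} :
    l ∈ avoiders213 s ↔ l.Nodup ∧ (∀ x, x ∈ l ↔ x ∈ s) ∧ Avoids213 l := by
  have hval : s.val = (l : Multiset α) ↔ l.Nodup ∧ ∀ x, x ∈ l ↔ x ∈ s := by
    constructor
    · intro h
      exact ⟨by simpa [h] using s.nodup, fun x ↦ by rw [← mem_val, h, Multiset.mem_coe]⟩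
    · rintro ⟨hnodup, hmem⟩
      exact (Multiset.Nodup.ext s.nodup (Multiset.coe_nodup.2 hnodup)).2 fun x ↦ (hmem x).symm
  simp [avoiders213, hval, and_assoc]

theorem length_of_mem_avoiders213 {s : Finset α} {l : List α} (h : l ∈ avoiders213 s) :
    l.length = #s := by
  obtain ⟨hnodup, hmem, -⟩ := mem_avoiders213.1 h
  rw [← List.toFinset_card_of_nodup hnodup]
  congr 1
  ext x
  simp [hmem]

theorem avoiders213_empty : avoiders213 (∅ : Finset α) = {[]} := by
  ext l
  simp only [mem_avoiders213, notMem_empty, iff_false, ← List.eq_nil_iff_forall_not_mem,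
    mem_singleton]
  constructor
  · exact fun h ↦ h.2.1
  · rintro rfl
    exact ⟨.nil, rfl, .nil⟩

theorem cons_mem_avoiders213 {s : Finset α} {a : α} {t : List α} :
    a :: t ∈ avoiders213 s ↔
      a ∈ s ∧ ∃ u ∈ avoiders213 {x ∈ s | a < x}, ∃ v ∈ avoiders213 {x ∈ s | x < a}, u ++ v = t := by
  constructor
  · intro h
    obtain ⟨hnodup, hmem, hav⟩ := mem_avoiders213.1 h
    obtain ⟨hat, htnodup⟩ := List.nodup_cons.1 hnodup
    have hmem_of_ne {x : α} (hx : x ≠ a) : x ∈ t ↔ x ∈ s := by simp [← hmem, hx]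
    have htav : Avoids213 t := (List.triplewise_cons.1 hav).2
    refine ⟨(hmem a).1 List.mem_cons_self, _, ?_, _, ?_, hav.filter_gt_append_filter_lt hat⟩ <;>
      refine mem_avoiders213.2 ⟨htnodup.filter _, fun x ↦ ?_, htav.filter _⟩ <;>
      simp only [List.mem_filter, mem_filter, decide_eq_true_eq, and_congr_left_iff]
    · exact fun hx ↦ hmem_of_ne hx.ne'
    · exact fun hx ↦ hmem_of_ne hx.ne
  · rintro ⟨ha, u, hu, v, hv, rfl⟩
    obtain ⟨hunodup, humem, huav⟩ := mem_avoiders213.1 hu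
    obtain ⟨hvnodup, hvmem, hvav⟩ := mem_avoiders213.1 hv
    have hau : ∀ x ∈ u, a < x := fun x hx ↦ (mem_filter.1 ((humem x).1 hx)).2
    have hva : ∀ y ∈ v, y < a := fun y hy ↦ (mem_filter.1 ((hvmem y).1 hy)).2
    refine mem_avoiders213.2 ⟨?_, fun x ↦ ?_, huav.cons_append hvav hau hva⟩
    · refine List.nodup_cons.2 ⟨?_, List.nodup_append.2 ⟨hunodup, hvnodup, ?_⟩⟩
      · simp [humem, hvmem]
      · exact fun x hx y hy ↦ ((hva y hy).trans (hau x hx)).ne'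
    · rcases lt_trichotomy x a with h | rfl | h
      · simp [humem, hvmem, h, h.ne, h.not_gt]
      · simpa using ha
      · simp [humem, hvmem, h, h.ne', h.not_gt]

theorem avoiders213_eq_biUnion {s : Finset α} (hs : s.Nonempty) :
    avoiders213 s = s.biUnion fun a ↦
      image₂ (fun u v ↦ a :: (u ++ v)) (avoiders213 {x ∈ s | a < x})
        (avoiders213 {x ∈ s | x < a}) := by
  ext l
  cases l with
  | nil =>
    obtain ⟨a, ha⟩ := hs
    simpa [mem_avoiders213] using fun h ↦ absurd ha (h a)
  | cons b t =>
    simp only [mem_biUnion, mem_image₂, List.cons.injEq, cons_mem_avoiders213]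
    aesop

theorem card_avoiders213_eq_sum {s : Finset α} (hs : s.Nonempty) :
    #(avoiders213 s) =
      ∑ a ∈ s, #(avoiders213 {x ∈ s | x < a}) * #(avoiders213 {x ∈ s | a < x}) := by
  rw [avoiders213_eq_biUnion hs, card_biUnion]
  · refine sum_congr rfl fun a _ ↦ ?_
    rw [mul_comm, card_image₂_iff]
    rintro ⟨u, v⟩ huv ⟨u', v'⟩ huv' h
    have hlen : u.length = u'.length :=
      (length_of_mem_avoiders213 huv.1).trans (length_of_mem_avoiders213 huv'.1).symm
    exact Prod.ext_iff.2 (List.append_inj (List.cons.inj h).2 hlen)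
  · intro a _ b _ hab
    simp only [Function.onFun, disjoint_left, mem_image₂]
    rintro _ ⟨u, _, v, _, rfl⟩ ⟨u', _, v', _, h⟩
    exact hab (List.cons.inj h).1.symm

theorem card_avoiders213 (s : Finset α) : #(avoiders213 s) = catalan #s := by
  induction s using Finset.strongInduction with
  | H s ih =>
    obtain rfl | hs := s.eq_empty_or_nonempty
    · simp [avoiders213_empty]
    have hlt : ∀ a ∈ s, #(avoiders213 {x ∈ s | x < a}) = catalan #{x ∈ s | x < a} :=
      fun a ha ↦ ih _ (filter_ssubset.2 ⟨a, ha, lt_irrefl a⟩)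
    have hgt : ∀ a ∈ s, #(avoiders213 {x ∈ s | a < x}) = catalan #{x ∈ s | a < x} :=
      fun a ha ↦ ih _ (filter_ssubset.2 ⟨a, ha, lt_irrefl a⟩)
    rw [card_avoiders213_eq_sum hs, sum_congr rfl fun a ha ↦ by rw [hlt a ha, hgt a ha],
      sum_card_filter_lt_card_filter_gt s fun i j ↦ catalan i * catalan j]
    obtain ⟨n, hn⟩ := Nat.exists_eq_add_one.2 hs.card_pos
    rw [hn, catalan_succ, Nat.add_sub_cancel]

end LinearOrder

theorem lt_of_not_contains213 {n : ℕ} {π : Equiv.Perm (Fin n)} (h : ¬ contains213 π)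
    {i j k : Fin n} (hij : i < j) (hjk : j ≤ k) (hji : π j < π i) : π k < π i := by
  obtain ⟨k, hk⟩ := k
  change (j : ℕ) ≤ k at hjk
  induction k, hjk using Nat.le_induction with
  | base => exact hji
  | succ m hjm ih =>
    have him : (i : ℕ) < m := lt_of_lt_of_le hij hjm
    have hne : π ⟨m + 1, hk⟩ ≠ π i := π.injective.ne (Fin.ne_of_gt (him.trans m.lt_succ_self))
    exact hne.lt_or_gt.resolve_right fun hgt ↦
      h ⟨i, m, him, hk, ih (m.lt_succ_self.trans hk), hgt⟩

theorem avoids213_ofFn_iff {n : ℕ} {π : Equiv.Perm (Fin n)} :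
    Avoids213 (List.ofFn π) ↔ ¬ contains213 π := by
  simp only [Avoids213, List.triplewise_iff_getElem, List.length_ofFn, List.getElem_ofFn]
  constructor
  · rintro h ⟨i, j, hij, hj, hocc⟩
    exact h i j (j + 1) hij j.lt_succ_self hj hocc
  · rintro h i j k hij hjk hk ⟨hji, hik⟩
    exact (lt_of_not_contains213 (i := ⟨i, by omega⟩) (j := ⟨j, by omega⟩) (k := ⟨k, hk⟩)
      h hij hjk.le hji).not_gt hik

theorem ofFn_mem_avoiders213_univ_iff {n : ℕ} {π : Equiv.Perm (Fin n)} :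
    List.ofFn π ∈ avoiders213 univ ↔ ¬ contains213 π := by
  simp [mem_avoiders213, avoids213_ofFn_iff, List.nodup_ofFn, π.injective, π.surjective _]

theorem exists_ofFn_eq_of_mem_avoiders213_univ {n : ℕ} {l : List (Fin n)}
    (h : l ∈ avoiders213 univ) : ∃ π : Equiv.Perm (Fin n), List.ofFn π = l := by
  obtain ⟨hnodup, -, -⟩ := mem_avoiders213.1 h
  have hlen : n = l.length := by simpa using (length_of_mem_avoiders213 h).symm
  have hinj : Function.Injective fun i : Fin n ↦ l.get (i.cast hlen) :=
    (List.nodup_iff_injective_get.1 hnodup).comp (Fin.cast_injective hlen)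
  exact ⟨.ofBijective _ (Finite.injective_iff_bijective.1 hinj),
    List.ext_getElem (by simpa using hlen) (by simp)⟩

theorem stmt2 (n : ℕ) :
    Nat.card {π : Equiv.Perm (Fin n) // ¬ contains213 π} = Nat.choose (2 * n) n / (n + 1) := by
  have hbij : Function.Bijective
      (fun π ↦ ⟨List.ofFn π.1, ofFn_mem_avoiders213_univ_iff.2 π.2⟩ :
        {π : Equiv.Perm (Fin n) // ¬ contains213 π} → avoiders213 (univ : Finset (Fin n))) := by
    constructor
    · intro π σ h
      exact Subtype.ext (DFunLike.coe_injective (List.ofFn_injective (congrArg Subtype.val h)))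
    · rintro ⟨l, hl⟩
      obtain ⟨π, rfl⟩ := exists_ofFn_eq_of_mem_avoiders213_univ hl
      exact ⟨⟨π, ofFn_mem_avoiders213_univ_iff.1 hl⟩, rfl⟩
  calc Nat.card {π : Equiv.Perm (Fin n) // ¬ contains213 π}
      = #(avoiders213 (univ : Finset (Fin n))) := by
        rw [Nat.card_eq_of_bijective _ hbij, Nat.card_eq_finsetCard]
    _ = catalan n := by rw [card_avoiders213, card_fin]
    _ = Nat.choose (2 * n) n / (n + 1) := by
        rw [catalan_eq_centralBinom_div, Nat.centralBinom_eq_two_mul_choose]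
end

section
/- For all n, the number of permutations of [n] avoiding both generalized patterns 1-23 and 21-3 equals the n-th Motzkin number M_n; equivalently, |S_n(1-23, 21-3)| = |S_n(1-23, 13-2)|. -/
def contains123 {n : ℕ} (π : Equiv.Perm (Fin n)) : Prop :=
  ∃ i j : ℕ, ∃ (_ : i < j) (hj : j + 1 < n),
    π ⟨i, by omega⟩ < π ⟨j, by omega⟩ ∧ π ⟨j, by omega⟩ < π ⟨j + 1, hj⟩

def contains21_3 {n : ℕ} (π : Equiv.Perm (Fin n)) : Prop :=
  ∃ i j : ℕ, ∃ (_ : i + 1 < j) (hj : j < n),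
    π ⟨i + 1, by omega⟩ < π ⟨i, by omega⟩ ∧ π ⟨i, by omega⟩ < π ⟨j, hj⟩

def contains13_2 {n : ℕ} (π : Equiv.Perm (Fin n)) : Prop :=
  ∃ i j : ℕ, ∃ (_ : i + 1 < j) (hj : j < n),
    π ⟨i, by omega⟩ < π ⟨j, hj⟩ ∧ π ⟨j, hj⟩ < π ⟨i + 1, by omega⟩

def motzkin : ℕ → ℕ
  | 0 => 1
  | n + 1 => motzkin n + ∑ k ∈ (Finset.range n).attach,
      motzkin k * motzkin (n - 1 - k)
  decreasing_by
  · exact Nat.lt_succ_self n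
  · have := Finset.mem_range.mp k.2; omega
  · have := Finset.mem_range.mp k.2; omega

/-!
Permutations avoiding 1-23 and 21-3 are grown by inserting a new minimum, those avoiding 1-23 and
13-2 by inserting a new maximum. In both cases the allowed positions are one base position, which
creates a new active site, and the active sites of the word, where inserting at one of them keeps
only the active sites to its right. So both classes have the generating tree with root `(0)` and
succession rule `(l) ⟶ (0) (1) ⋯ (l - 1) (l + 1)`. With `M = 1 + X M + X² M²` the generating
function of the Motzkin numbers, the descendants of a node labelled `l` are counted by
`M (1 + X M) ^ l`: these series satisfy the recursion of the tree, by summing a geometric series,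
and `l = 0` gives `M`.
-/

open Finset Fin

section MotzkinTree

open PowerSeries

/-- The number of `m`-th generation descendants of a node labelled `l` in the generating tree with
succession rule `(l) ⟶ (0) (1) ⋯ (l - 1) (l + 1)`. -/
def motzkinDescendants : ℕ → ℕ → ℕ
  | 0, _ => 1
  | m + 1, l => motzkinDescendants m (l + 1) + ∑ j ∈ range l, motzkinDescendants m j

/-- The generating function `∑ Mₙ Xⁿ` of the Motzkin numbers. -/
def motzkinSeries : PowerSeries ℕ := mk motzkin

theorem motzkin_succ (n : ℕ) :
    motzkin (n + 1) = motzkin n + ∑ k ∈ range n, motzkin k * motzkin (n - 1 - k) := by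
  rw [motzkin, sum_attach (range n) fun k ↦ motzkin k * motzkin (n - 1 - k)]

theorem motzkinSeries_eq :
    motzkinSeries = 1 + X * (motzkinSeries * (1 + X * motzkinSeries)) := by
  rw [mul_add, mul_one, mul_left_comm motzkinSeries X]
  ext (_ | _ | n)
  · simp [motzkinSeries, motzkin]
  · simp [motzkinSeries, motzkin_succ, coeff_one]
  · simp only [map_add, coeff_succ_X_mul]
    simp [motzkinSeries, motzkin_succ, coeff_one, coeff_mul,
      Nat.sum_antidiagonal_eq_sum_range_succ_mk]

theorem mul_pow_eq_of_motzkin_equation {R : Type*} [CommSemiring R] {x m : R}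
    (h : m = 1 + x * (m * (1 + x * m))) (l : ℕ) :
    m * (1 + x * m) ^ l =
      1 + x * (m * (1 + x * m) ^ (l + 1) + ∑ j ∈ range l, m * (1 + x * m) ^ j) := by
  have geom : (∑ j ∈ range l, (1 + x * m) ^ j) * (x * m) + 1 = (1 + x * m) ^ l := by
    rw [add_comm 1 (x * m), geom_sum_mul_add]
  calc m * (1 + x * m) ^ l
      = (1 + x * (m * (1 + x * m))) * (1 + x * m) ^ l := by rw [← h]
    _ = (1 + x * m) ^ l + x * (m * (1 + x * m) ^ (l + 1)) := by ring
    _ = (∑ j ∈ range l, (1 + x * m) ^ j) * (x * m) + 1 + x * (m * (1 + x * m) ^ (l + 1)) := by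
        rw [geom]
    _ = 1 + x * (m * (1 + x * m) ^ (l + 1) + ∑ j ∈ range l, m * (1 + x * m) ^ j) := by
        rw [← mul_sum]; ring

theorem motzkinDescendants_eq_coeff (m l : ℕ) :
    motzkinDescendants m l = coeff m (motzkinSeries * (1 + X * motzkinSeries) ^ l) := by
  induction m generalizing l with
  | zero => rw [mul_pow_eq_of_motzkin_equation motzkinSeries_eq]; simp [motzkinDescendants]
  | succ m ih =>
    rw [mul_pow_eq_of_motzkin_equation motzkinSeries_eq, map_add, coeff_succ_X_mul, map_add,
      map_sum]
    simp [motzkinDescendants, ih, coeff_one]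

theorem motzkinDescendants_zero_right (n : ℕ) : motzkinDescendants n 0 = motzkin n := by
  simp [motzkinDescendants_eq_coeff, motzkinSeries]

end MotzkinTree

theorem sum_card_filter_lt {α M : Type*} [LinearOrder α] [AddCommMonoid M] (s : Finset α)
    (f : ℕ → M) : ∑ k ∈ s, f #{q ∈ s | k < q} = ∑ j ∈ range #s, f j := by
  induction s using Finset.induction_on_min with
  | empty => simp
  | insert a s ha ih =>
    have ha' : a ∉ s := fun h ↦ (ha a h).false
    have hrest : ∑ k ∈ s, f #{q ∈ insert a s | k < q} = ∑ k ∈ s, f #{q ∈ s | k < q} :=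
      sum_congr rfl fun k hk ↦ by rw [filter_insert, if_neg (ha k hk).not_gt]
    rw [sum_insert ha', hrest, ih, card_insert_of_notMem ha', sum_range_succ, add_comm,
      filter_insert, if_neg (lt_irrefl a), filter_true_of_mem ha]

section InsertEntry

variable {n : ℕ}

/-- The permutation obtained from the word of `π` by inserting the value `a` at position `p`,
after raising all values `≥ a` by one. -/
def insertEntry (p a : Fin (n + 1)) (π : Equiv.Perm (Fin n)) : Equiv.Perm (Fin (n + 1)) :=
  (finSuccEquiv' p).trans ((Equiv.optionCongr π).trans (finSuccEquiv' a).symm)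

@[simp]
theorem insertEntry_self (p a : Fin (n + 1)) (π : Equiv.Perm (Fin n)) :
    insertEntry p a π p = a := by
  simp [insertEntry]

@[simp]
theorem insertEntry_succAbove (p a : Fin (n + 1)) (π : Equiv.Perm (Fin n)) (i : Fin n) :
    insertEntry p a π (p.succAbove i) = a.succAbove (π i) := by
  simp [insertEntry]

theorem insertEntry_bijective (a : Fin (n + 1)) :
    Function.Bijective fun x : Equiv.Perm (Fin n) × Fin (n + 1) ↦ insertEntry x.2 a x.1 := by
  refine (Fintype.bijective_iff_injective_and_card _).2 ⟨?_, ?_⟩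
  · rintro ⟨π, p⟩ ⟨σ, q⟩ (h : insertEntry p a π = insertEntry q a σ)
    obtain rfl : p = q := (insertEntry q a σ).injective <| by
      rw [insertEntry_self, ← h, insertEntry_self]
    have hπ : π = σ := Equiv.ext fun i ↦ a.succAbove_right_injective <| by
      rw [← insertEntry_succAbove p, h, insertEntry_succAbove]
    rw [hπ]
  · simp [Fintype.card_perm, Nat.factorial_succ, mul_comm]

/-- A class `C` of permutations, grown by inserting the value `a n` into words of length `n`, which
follows the succession rule `(l) ⟶ (0) (1) ⋯ (l - 1) (l + 1)`. Insertion at the base position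
`b n` is always allowed; the other allowed positions are the `(b n).succAbove k` with `k` in the
set `sites n π` of active sites, whose size is the label of `π`. -/
structure FollowsMotzkinRule (C : ∀ n, Equiv.Perm (Fin n) → Prop)
    (sites : ∀ n, Equiv.Perm (Fin n) → Finset (Fin n)) (a b : ∀ n, Fin (n + 1)) : Prop where
  zero (π) : C 0 π
  insert_base {n π} : C (n + 1) (insertEntry (b n) (a n) π) ↔ C n π
  insert_succAbove {n π k} :
    C (n + 1) (insertEntry ((b n).succAbove k) (a n) π) ↔ C n π ∧ k ∈ sites n π
  card_sites_insert_base {n π} :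
    #(sites (n + 1) (insertEntry (b n) (a n) π)) = #(sites n π) + 1
  card_sites_insert_succAbove {n π k} (hk : k ∈ sites n π) :
    #(sites (n + 1) (insertEntry ((b n).succAbove k) (a n) π)) = #{q ∈ sites n π | k < q}

namespace FollowsMotzkinRule

variable {C : ∀ n, Equiv.Perm (Fin n) → Prop}
  {sites : ∀ n, Equiv.Perm (Fin n) → Finset (Fin n)} {a b : ∀ n, Fin (n + 1)}

open Classical in
theorem sum_succ (h : FollowsMotzkinRule C sites a b) (f : ℕ → ℕ) :
    ∑ τ with C (n + 1) τ, f #(sites (n + 1) τ) =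
      ∑ π with C n π, (f (#(sites n π) + 1) + ∑ j ∈ range #(sites n π), f j) := by
  simp only [sum_filter]
  rw [← (insertEntry_bijective (a n)).sum_comp, Fintype.sum_prod_type]
  refine sum_congr rfl fun π _ ↦ ?_
  rw [Fin.sum_univ_succAbove _ (b n)]
  simp only [h.insert_base, h.insert_succAbove, h.card_sites_insert_base]
  by_cases hπ : C n π
  · simp only [hπ, true_and, if_true, ← sum_filter, filter_mem_eq_inter, univ_inter]
    rw [← sum_card_filter_lt,
      sum_congr rfl fun k hk ↦ by rw [h.card_sites_insert_succAbove hk]]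
  · simp [hπ]

open Classical in
theorem sum_motzkinDescendants (h : FollowsMotzkinRule C sites a b) (n m : ℕ) :
    ∑ π with C n π, motzkinDescendants m #(sites n π) = motzkinDescendants (n + m) 0 := by
  induction n generalizing m with
  | zero => simp [filter_true_of_mem fun π _ ↦ h.zero π, card_eq_zero.2 (Subsingleton.elim _ ∅)]
  | succ n ih => rw [h.sum_succ, Nat.add_right_comm, Nat.add_assoc, ← ih (m + 1)]; rfl

theorem card_eq_motzkin (h : FollowsMotzkinRule C sites a b) (n : ℕ) :
    Nat.card {π // C n π} = motzkin n := by
  classical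
  calc Nat.card {π // C n π} = ∑ π with C n π, motzkinDescendants 0 #(sites n π) := by
        simp [motzkinDescendants, Nat.card_eq_fintype_card, Fintype.card_subtype]
    _ = motzkin n := by rw [h.sum_motzkinDescendants, Nat.add_zero, motzkinDescendants_zero_right]

end FollowsMotzkinRule

end InsertEntry

section Patterns

variable {n : ℕ} {π : Equiv.Perm (Fin n)}

theorem not_contains123_iff :
    ¬ contains123 π ↔ ∀ i j k, i < j → j ⋖ k → π i < π j → π k ≤ π j := by
  simp only [contains123, not_exists, not_and, not_lt]
  constructor
  · rintro h i ⟨j, _⟩ ⟨k, hk⟩ hij hjk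
    obtain rfl : j + 1 = k := by simpa using hjk
    exact h i j hij hk
  · exact fun h i j hij hj ↦ h _ _ _ hij (by simp)

theorem not_contains21_3_iff :
    ¬ contains21_3 π ↔ ∀ i j k, i ⋖ j → j < k → π j < π i → π k ≤ π i := by
  simp only [contains21_3, not_exists, not_and, not_lt]
  constructor
  · rintro h ⟨i, _⟩ ⟨j, _⟩ k hij hjk
    obtain rfl : i + 1 = j := by simpa using hij
    exact h i k hjk k.2
  · exact fun h i j hij hj ↦ h _ _ _ (by simp) hij

theorem not_contains13_2_iff :
    ¬ contains13_2 π ↔ ∀ i j k, i ⋖ j → j < k → π i < π k → π j ≤ π k := by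
  simp only [contains13_2, not_exists, not_and, not_lt]
  constructor
  · rintro h ⟨i, _⟩ ⟨j, _⟩ k hij hjk
    obtain rfl : i + 1 = j := by simpa using hij
    exact h i k hjk k.2
  · exact fun h i j hij hj ↦ h _ _ _ (by simp) hij

end Patterns

section SuccAbove

variable {n : ℕ}

theorem succAbove_covBy_or {i j : Fin n} (h : i ⋖ j) (p : Fin (n + 1)) :
    p.succAbove i ⋖ p.succAbove j ∨ p.succAbove i ⋖ p ∧ p ⋖ p.succAbove j := by
  have hij : p.succAbove i < p.succAbove j := succAbove_lt_succAbove_iff.2 h.lt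
  have between : ∀ c, p.succAbove i < c → c < p.succAbove j → c = p := fun c hic hcj ↦ by
    by_contra hc
    obtain ⟨c, rfl⟩ := exists_succAbove_eq hc
    exact h.2 (succAbove_lt_succAbove_iff.1 hic) (succAbove_lt_succAbove_iff.1 hcj)
  by_cases hp : p.succAbove i < p ∧ p < p.succAbove j
  · exact .inr ⟨⟨hp.1, fun c hic hcp ↦ hcp.ne (between c hic (hcp.trans hp.2))⟩,
      ⟨hp.2, fun c hpc hcj ↦ hpc.ne' (between c (hp.1.trans hpc) hcj)⟩⟩
  · refine .inl ⟨hij, fun c hic hcj ↦ hp ?_⟩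
    have hcp := between c hic hcj
    exact ⟨hcp ▸ hic, hcp ▸ hcj⟩

theorem covBy_of_succAbove_covBy {p : Fin (n + 1)} {i j : Fin n}
    (h : p.succAbove i ⋖ p.succAbove j) : i ⋖ j :=
  CovBy.of_image (succAboveOrderEmb p) h

theorem le_succ_of_succAbove_covBy {p : Fin (n + 1)} {i : Fin n} (h : p.succAbove i ⋖ p) :
    p ≤ i.succ := by
  rw [succAbove_of_castSucc_lt _ _ ((succAbove_lt_iff_castSucc_lt _ _).1 h.lt)] at h
  exact not_lt.1 (h.2 i.castSucc_lt_succ)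

theorem succAbove_le_succ (p : Fin (n + 1)) (i : Fin n) : p.succAbove i ≤ i.succ := by
  rw [succAbove]
  split_ifs
  exacts [i.castSucc_lt_succ.le, le_rfl]

theorem strictAntiOn_setOf_last_le_succ {α : Type*} [Preorder α] (f : Fin n → α) :
    StrictAntiOn f {i | last n ≤ i.succ} := fun _ hi j _ hij ↦
  absurd (succ_lt_succ_iff.2 hij) ((le_last j.succ).trans hi).not_gt

theorem card_eq_card_filter_succAbove (p : Fin (n + 1)) (s : Finset (Fin (n + 1))) :
    #s = (if p ∈ s then 1 else 0) + #{q | p.succAbove q ∈ s} := by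
  rw [← filter_univ_mem s, card_filter, Fin.sum_univ_succAbove _ p]
  simp

end SuccAbove

section Avoid123And21_3

variable {n : ℕ} {p : Fin (n + 1)} {π : Equiv.Perm (Fin n)}

open Classical in
/-- The positions `k < n` at which a new minimum may be inserted into the word of `π` without
creating an occurrence of 1-23 or 21-3: the letters from the one just before `k` on decrease. -/
noncomputable def descendingTailSites (n : ℕ) (π : Equiv.Perm (Fin n)) : Finset (Fin n) :=
  {k | StrictAntiOn π {i | k.castSucc ≤ i.succ}}

theorem mem_descendingTailSites {k : Fin n} :
    k ∈ descendingTailSites n π ↔ StrictAntiOn π {i | k.castSucc ≤ i.succ} := by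
  simp [descendingTailSites]

theorem strictAntiOn_insertEntry_zero_iff {s : Set (Fin (n + 1))} (hs : IsUpperSet s) :
    StrictAntiOn (insertEntry p 0 π) s ↔
      (p ∈ s → p = last n) ∧ StrictAntiOn π (p.succAbove ⁻¹' s) := by
  refine ⟨fun h ↦ ⟨fun hp ↦ ?_, fun i hi j hj hij ↦ ?_⟩, fun ⟨hlast, h⟩ i hi j hj hij ↦ ?_⟩
  · by_contra hne
    have hlt : p < last n := lt_last_iff_ne_last.2 hne
    simpa using h hp (hs hlt.le hp) hlt
  · simpa using h hi hj (succAbove_lt_succAbove_iff.2 hij)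
  · obtain rfl | ⟨i, rfl⟩ := eq_self_or_eq_succAbove p i
    · exact absurd (hlast hi ▸ hij) (le_last j).not_gt
    obtain rfl | ⟨j, rfl⟩ := eq_self_or_eq_succAbove p j
    · simp
    · simpa using h hi hj (succAbove_lt_succAbove_iff.1 hij)

theorem le_of_insertEntry_zero_not_contains21_3 (h : ¬ contains21_3 (insertEntry p 0 π))
    {i k : Fin n} (hi : p.succAbove i ⋖ p) (hk : p < p.succAbove k) : π k ≤ π i := by
  simpa using not_contains21_3_iff.1 h _ _ _ hi hk (by simp)

theorem not_contains123_of_insertEntry_zero (h₁ : ¬ contains123 (insertEntry p 0 π))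
    (h₂ : ¬ contains21_3 (insertEntry p 0 π)) : ¬ contains123 π := by
  refine not_contains123_iff.2 fun i j k hij hjk hlt ↦ ?_
  obtain hadj | ⟨hjp, hpk⟩ := succAbove_covBy_or hjk p
  · simpa using not_contains123_iff.1 h₁ _ _ _ (succAbove_lt_succAbove_iff.2 hij) hadj (by simpa)
  · exact le_of_insertEntry_zero_not_contains21_3 h₂ hjp hpk.lt

theorem not_contains21_3_of_insertEntry_zero (h : ¬ contains21_3 (insertEntry p 0 π)) :
    ¬ contains21_3 π := by
  refine not_contains21_3_iff.2 fun i j k hij hjk hlt ↦ ?_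
  have hjk' : p.succAbove j < p.succAbove k := succAbove_lt_succAbove_iff.2 hjk
  obtain hadj | ⟨hip, hpj⟩ := succAbove_covBy_or hij p
  · simpa using not_contains21_3_iff.1 h _ _ _ hadj hjk' (by simpa)
  · exact le_of_insertEntry_zero_not_contains21_3 h hip (hpj.lt.trans hjk')

theorem strictAntiOn_of_insertEntry_zero (h₁ : ¬ contains123 (insertEntry p 0 π))
    (h₂ : ¬ contains21_3 (insertEntry p 0 π)) : StrictAntiOn π {i | p ≤ i.succ} := by
  refine strictAntiOn_of_succ_lt ⟨fun i hi _ _ j hj ↦ hi.trans (succ_le_succ_iff.2 hj.1)⟩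
    fun i hmax hi _ ↦ ?_
  have hcov : i ⋖ Order.succ i := Order.covBy_succ_of_not_isMax hmax
  refine lt_of_le_of_ne ?_ (π.injective.ne hcov.lt.ne')
  obtain hadj | ⟨hip, hpj⟩ := succAbove_covBy_or hcov p
  · have hpj : p < p.succAbove (Order.succ i) :=
      (lt_succAbove_iff_lt_castSucc _ _).2 (hi.trans_lt (succ_lt_succ_iff.2 hcov.lt))
    have hpi : p < p.succAbove i :=
      (p.succAbove_ne i).symm.lt_of_le (not_lt.1 fun hip ↦ hadj.2 hip hpj)
    simpa using not_contains123_iff.1 h₁ _ _ _ hpi hadj (by simp)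
  · exact le_of_insertEntry_zero_not_contains21_3 h₂ hip hpj.lt

theorem insertEntry_zero_not_contains123 (h : ¬ contains123 π)
    (hanti : StrictAntiOn π {i | p ≤ i.succ}) : ¬ contains123 (insertEntry p 0 π) := by
  refine not_contains123_iff.2 fun i j k hij hjk hlt ↦ ?_
  obtain rfl | ⟨j, rfl⟩ := eq_self_or_eq_succAbove p j
  · simp at hlt
  obtain rfl | ⟨k, rfl⟩ := eq_self_or_eq_succAbove p k
  · simp
  have hadj : j ⋖ k := covBy_of_succAbove_covBy hjk
  simp only [insertEntry_succAbove, zero_succAbove, succ_le_succ_iff] at hlt ⊢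
  obtain rfl | ⟨i, rfl⟩ := eq_self_or_eq_succAbove p i
  · have hj : i ≤ j.succ := ((lt_succAbove_iff_lt_castSucc _ _).1 hij).le
    exact (hanti hj (hj.trans (succ_le_succ_iff.2 hadj.le)) hadj.lt).le
  · exact not_contains123_iff.1 h i j k (succAbove_lt_succAbove_iff.1 hij) hadj (by simpa using hlt)

theorem insertEntry_zero_not_contains21_3 (h : ¬ contains21_3 π)
    (hanti : StrictAntiOn π {i | p ≤ i.succ}) : ¬ contains21_3 (insertEntry p 0 π) := by
  refine not_contains21_3_iff.2 fun i j k hij hjk hlt ↦ ?_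
  obtain rfl | ⟨i, rfl⟩ := eq_self_or_eq_succAbove p i
  · simp at hlt
  obtain rfl | ⟨k, rfl⟩ := eq_self_or_eq_succAbove p k
  · simp
  have hik : i < k := succAbove_lt_succAbove_iff.1 (hij.lt.trans hjk)
  simp only [insertEntry_succAbove, zero_succAbove, succ_le_succ_iff] at hlt ⊢
  obtain rfl | ⟨j, rfl⟩ := eq_self_or_eq_succAbove p j
  · have hi : j ≤ i.succ := le_succ_of_succAbove_covBy hij
    exact (hanti hi (hi.trans (succ_le_succ_iff.2 hik.le)) hik).le
  · exact not_contains21_3_iff.1 h i j k (covBy_of_succAbove_covBy hij)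
      (succAbove_lt_succAbove_iff.1 hjk) (by simpa using hlt)

theorem insertEntry_zero_avoids_iff :
    (¬ contains123 (insertEntry p 0 π) ∧ ¬ contains21_3 (insertEntry p 0 π)) ↔
      (¬ contains123 π ∧ ¬ contains21_3 π) ∧ StrictAntiOn π {i | p ≤ i.succ} :=
  ⟨fun ⟨h₁, h₂⟩ ↦ ⟨⟨not_contains123_of_insertEntry_zero h₁ h₂,
      not_contains21_3_of_insertEntry_zero h₂⟩, strictAntiOn_of_insertEntry_zero h₁ h₂⟩,
    fun ⟨⟨h₁, h₂⟩, hanti⟩ ↦ ⟨insertEntry_zero_not_contains123 h₁ hanti,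
      insertEntry_zero_not_contains21_3 h₂ hanti⟩⟩

theorem mem_descendingTailSites_insertEntry_zero {k : Fin (n + 1)} :
    k ∈ descendingTailSites (n + 1) (insertEntry p 0 π) ↔
      (k.castSucc ≤ p.succ → p = last n) ∧
        StrictAntiOn π {i | k.castSucc ≤ (p.succAbove i).succ} :=
  mem_descendingTailSites.trans <| strictAntiOn_insertEntry_zero_iff fun _ _ hij hi ↦
    le_trans hi (succ_le_succ_iff.2 hij)

theorem mem_descendingTailSites_insertEntry_last {k : Fin (n + 1)} :
    k ∈ descendingTailSites (n + 1) (insertEntry (last n) 0 π) ↔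
      StrictAntiOn π {i | k ≤ i.succ} := by
  simp only [mem_descendingTailSites_insertEntry_zero, implies_true, true_and, succAbove_last,
    succ_castSucc, castSucc_le_castSucc_iff]

theorem card_descendingTailSites_insertEntry_last :
    #(descendingTailSites (n + 1) (insertEntry (last n) 0 π)) =
      #(descendingTailSites n π) + 1 := by
  have hlast : last n ∈ descendingTailSites (n + 1) (insertEntry (last n) 0 π) :=
    mem_descendingTailSites_insertEntry_last.2 (strictAntiOn_setOf_last_le_succ π)
  rw [card_eq_card_filter_succAbove (last n), if_pos hlast, add_comm]
  simp only [succAbove_last, mem_descendingTailSites_insertEntry_last, ← mem_descendingTailSites,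
    filter_univ_mem]

theorem card_descendingTailSites_insertEntry_castSucc {k : Fin n}
    (hk : k ∈ descendingTailSites n π) :
    #(descendingTailSites (n + 1) (insertEntry k.castSucc 0 π)) =
      #{q ∈ descendingTailSites n π | k < q} := by
  rw [mem_descendingTailSites] at hk
  have hzero : 0 ∉ descendingTailSites (n + 1) (insertEntry k.castSucc 0 π) := fun h ↦
    k.castSucc_ne_last ((mem_descendingTailSites_insertEntry_zero.1 h).1 (Fin.zero_le _))
  have hsucc (q : Fin n) : q.succ ∈ descendingTailSites (n + 1) (insertEntry k.castSucc 0 π) ↔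
      q ∈ descendingTailSites n π ∧ k < q := by
    have hkq : (q.succ.castSucc ≤ k.castSucc.succ → k.castSucc = last n) ↔ k < q := by
      simp [castSucc_ne_last]
    rw [mem_descendingTailSites_insertEntry_zero, mem_descendingTailSites, hkq, and_comm]
    refine and_congr_left fun hlt ↦ iff_of_true (hk.mono fun i hi ↦ ?_) (hk.mono fun i hi ↦ ?_)
    · have hqi : q.castSucc ≤ k.castSucc.succAbove i := by simpa [← succ_castSucc] using hi
      exact (castSucc_le_castSucc_iff.2 hlt.le).trans (hqi.trans (succAbove_le_succ _ _))
    · exact (castSucc_le_castSucc_iff.2 hlt.le).trans hi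
  rw [card_eq_card_filter_succAbove 0, if_neg hzero, zero_add]
  simp only [zero_succAbove, hsucc, ← filter_filter, filter_univ_mem]

theorem followsMotzkinRule_descendingTailSites :
    FollowsMotzkinRule (fun _ π ↦ ¬ contains123 π ∧ ¬ contains21_3 π) descendingTailSites
      (fun _ ↦ 0) last where
  zero π := by simp [contains123, contains21_3]
  insert_base := insertEntry_zero_avoids_iff.trans <|
    and_iff_left (strictAntiOn_setOf_last_le_succ _)
  insert_succAbove := by
    simp only [succAbove_last, insertEntry_zero_avoids_iff, mem_descendingTailSites, implies_true]
  card_sites_insert_base := card_descendingTailSites_insertEntry_last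
  card_sites_insert_succAbove hk := by
    simpa only [succAbove_last] using card_descendingTailSites_insertEntry_castSucc hk

end Avoid123And21_3

section Avoid123And13_2

variable {n : ℕ} {p : Fin (n + 1)} {π : Equiv.Perm (Fin n)}

/-- The positions `k` at which the word of `π` splits, in the sense of a skew sum, just before and
just after the letter `π k`: all earlier letters are larger and all later ones smaller. A new
maximum may be inserted right after such a letter without creating an occurrence of 1-23 or
13-2. -/
def skewPoints (n : ℕ) (π : Equiv.Perm (Fin n)) : Finset (Fin n) :=
  {k | ∀ i, (i < k → π k < π i) ∧ (k < i → π i < π k)}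

theorem mem_skewPoints {k : Fin n} :
    k ∈ skewPoints n π ↔ ∀ i, (i < k → π k < π i) ∧ (k < i → π i < π k) := by
  simp [skewPoints]

theorem self_mem_skewPoints_insertEntry_last :
    p ∈ skewPoints (n + 1) (insertEntry p (last n) π) ↔ p = 0 := by
  rw [mem_skewPoints]
  constructor
  · intro h
    by_contra hp
    have hlt := (h 0).1 (Fin.pos_iff_ne_zero.2 hp)
    rw [insertEntry_self] at hlt
    exact (le_last _).not_gt hlt
  · rintro rfl i
    refine ⟨fun hi ↦ absurd hi (not_lt_zero i), fun hi ↦ ?_⟩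
    obtain ⟨i, rfl⟩ := exists_succAbove_eq hi.ne'
    rw [insertEntry_self, insertEntry_succAbove, succAbove_last]
    exact castSucc_lt_last _

theorem succAbove_mem_skewPoints_insertEntry_last {k : Fin n} :
    p.succAbove k ∈ skewPoints (n + 1) (insertEntry p (last n) π) ↔
      k ∈ skewPoints n π ∧ p < p.succAbove k := by
  have hp : ¬ p.succAbove k < p ↔ p < p.succAbove k := by
    rw [not_lt, le_iff_lt_or_eq, or_iff_left (p.succAbove_ne k).symm]
  simp only [mem_skewPoints, p.forall_iff_succAbove, insertEntry_self, insertEntry_succAbove,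
    succAbove_lt_succAbove_iff, succAbove_last, castSucc_lt_castSucc_iff, castSucc_lt_last,
    (le_last _).not_gt, implies_true, true_and, imp_false, hp]
  exact and_comm

theorem card_skewPoints_insertEntry_zero :
    #(skewPoints (n + 1) (insertEntry 0 (last n) π)) = #(skewPoints n π) + 1 := by
  rw [card_eq_card_filter_succAbove 0, if_pos (self_mem_skewPoints_insertEntry_last.2 rfl),
    add_comm]
  simp only [succAbove_mem_skewPoints_insertEntry_last]
  simp

theorem card_skewPoints_insertEntry_succ (k : Fin n) :
    #(skewPoints (n + 1) (insertEntry k.succ (last n) π)) = #{q ∈ skewPoints n π | k < q} := by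
  rw [card_eq_card_filter_succAbove k.succ,
    if_neg (self_mem_skewPoints_insertEntry_last.not.2 k.succ_ne_zero), zero_add]
  simp only [succAbove_mem_skewPoints_insertEntry_last, lt_succAbove_iff_lt_castSucc,
    succ_lt_succ_iff, ← filter_filter, filter_univ_mem]

theorem not_contains123_of_insertEntry_last (h : ¬ contains123 (insertEntry p (last n) π)) :
    ¬ contains123 π := by
  refine not_contains123_iff.2 fun i j k hij hjk hlt ↦ ?_
  have hij' : p.succAbove i < p.succAbove j := succAbove_lt_succAbove_iff.2 hij
  obtain hadj | ⟨hjp, _⟩ := succAbove_covBy_or hjk p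
  · simpa using not_contains123_iff.1 h _ _ _ hij' hadj (by simpa)
  · simpa using not_contains123_iff.1 h _ _ _ hij' hjp (by simpa)

theorem not_contains13_2_of_insertEntry_last (h : ¬ contains13_2 (insertEntry p (last n) π)) :
    ¬ contains13_2 π := by
  refine not_contains13_2_iff.2 fun i j k hij hjk hlt ↦ ?_
  have hjk' : p.succAbove j < p.succAbove k := succAbove_lt_succAbove_iff.2 hjk
  obtain hadj | ⟨hip, hpj⟩ := succAbove_covBy_or hij p
  · simpa using not_contains13_2_iff.1 h _ _ _ hadj hjk' (by simpa)
  · simpa using not_contains13_2_iff.1 h _ _ _ hip (hpj.lt.trans hjk') (by simpa)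

theorem mem_skewPoints_of_insertEntry_last (h₁ : ¬ contains123 (insertEntry p (last n) π))
    (h₂ : ¬ contains13_2 (insertEntry p (last n) π)) {k : Fin n} (hk : p.succAbove k ⋖ p) :
    k ∈ skewPoints n π := by
  refine mem_skewPoints.2 fun i ↦ ⟨fun hik ↦ ?_, fun hki ↦ ?_⟩
  · have hik' : p.succAbove i < p.succAbove k := succAbove_lt_succAbove_iff.2 hik
    refine (π.injective.ne hik.ne').lt_of_le (le_of_not_gt fun hlt ↦ ?_)
    simpa using not_contains123_iff.1 h₁ _ _ _ hik' hk (by simpa)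
  · have hki' : p < p.succAbove i := (p.succAbove_ne i).symm.lt_of_le <|
      not_lt.1 (hk.2 (succAbove_lt_succAbove_iff.2 hki))
    refine (π.injective.ne hki.ne').lt_of_le (le_of_not_gt fun hlt ↦ ?_)
    simpa using not_contains13_2_iff.1 h₂ _ _ _ hk hki' (by simpa)

theorem insertEntry_last_not_contains123 (h : ¬ contains123 π)
    (hskew : ∀ k, p.succAbove k ⋖ p → k ∈ skewPoints n π) :
    ¬ contains123 (insertEntry p (last n) π) := by
  refine not_contains123_iff.2 fun i j k hij hjk hlt ↦ ?_
  obtain rfl | ⟨i, rfl⟩ := eq_self_or_eq_succAbove p i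
  · exact absurd hlt (by simpa using le_last _)
  obtain rfl | ⟨j, rfl⟩ := eq_self_or_eq_succAbove p j
  · simpa using le_last _
  have hij' : i < j := succAbove_lt_succAbove_iff.1 hij
  simp only [insertEntry_succAbove, succAbove_last, castSucc_lt_castSucc_iff] at hlt ⊢
  obtain rfl | ⟨k, rfl⟩ := eq_self_or_eq_succAbove p k
  · exact absurd ((mem_skewPoints.1 (hskew j hjk) i).1 hij') hlt.not_gt
  · simpa using not_contains123_iff.1 h i j k hij' (covBy_of_succAbove_covBy hjk) hlt

theorem insertEntry_last_not_contains13_2 (h : ¬ contains13_2 π)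
    (hskew : ∀ k, p.succAbove k ⋖ p → k ∈ skewPoints n π) :
    ¬ contains13_2 (insertEntry p (last n) π) := by
  refine not_contains13_2_iff.2 fun i j k hij hjk hlt ↦ ?_
  obtain rfl | ⟨i, rfl⟩ := eq_self_or_eq_succAbove p i
  · exact absurd hlt (by simpa using le_last _)
  obtain rfl | ⟨k, rfl⟩ := eq_self_or_eq_succAbove p k
  · simpa using le_last _
  have hik : i < k := succAbove_lt_succAbove_iff.1 (hij.lt.trans hjk)
  simp only [insertEntry_succAbove, succAbove_last, castSucc_lt_castSucc_iff] at hlt ⊢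
  obtain rfl | ⟨j, rfl⟩ := eq_self_or_eq_succAbove p j
  · exact absurd ((mem_skewPoints.1 (hskew i hij) k).2 hik) hlt.not_gt
  · simpa using not_contains13_2_iff.1 h i j k (covBy_of_succAbove_covBy hij)
      (succAbove_lt_succAbove_iff.1 hjk) hlt

theorem insertEntry_last_avoids_iff :
    (¬ contains123 (insertEntry p (last n) π) ∧ ¬ contains13_2 (insertEntry p (last n) π)) ↔
      (¬ contains123 π ∧ ¬ contains13_2 π) ∧ ∀ k, p.succAbove k ⋖ p → k ∈ skewPoints n π :=
  ⟨fun ⟨h₁, h₂⟩ ↦ ⟨⟨not_contains123_of_insertEntry_last h₁,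
      not_contains13_2_of_insertEntry_last h₂⟩, fun _ ↦ mem_skewPoints_of_insertEntry_last h₁ h₂⟩,
    fun ⟨⟨h₁, h₂⟩, hskew⟩ ↦ ⟨insertEntry_last_not_contains123 h₁ hskew,
      insertEntry_last_not_contains13_2 h₂ hskew⟩⟩

theorem followsMotzkinRule_skewPoints :
    FollowsMotzkinRule (fun _ π ↦ ¬ contains123 π ∧ ¬ contains13_2 π) skewPoints
      last (fun _ ↦ 0) where
  zero π := by simp [contains123, contains13_2]
  insert_base := insertEntry_last_avoids_iff.trans <| and_iff_left fun k hk ↦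
    absurd hk.lt (not_lt_zero _)
  insert_succAbove {n π k} := by
    have hk : k.succ.succAbove k ⋖ k.succ := by simp
    refine insertEntry_last_avoids_iff.trans <| and_congr_right fun _ ↦ ⟨fun h ↦ h k hk, ?_⟩
    intro hmem j hj
    obtain rfl : j = k := succAbove_right_injective (hj.unique_left hk)
    exact hmem
  card_sites_insert_base := card_skewPoints_insertEntry_zero
  card_sites_insert_succAbove {n π k} _ := card_skewPoints_insertEntry_succ k

end Avoid123And13_2

theorem stmt12 (n : ℕ) :
    Nat.card {π : Equiv.Perm (Fin n) // ¬ contains123 π ∧ ¬ contains21_3 π} = motzkin n ∧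
    Nat.card {π : Equiv.Perm (Fin n) // ¬ contains123 π ∧ ¬ contains21_3 π} = Nat.card {π : Equiv.Perm (Fin n) // ¬ contains123 π ∧ ¬ contains13_2 π} := by
  have h21_3 := followsMotzkinRule_descendingTailSites.card_eq_motzkin n
  have h13_2 := followsMotzkinRule_skewPoints.card_eq_motzkin n
  exact ⟨h21_3, h21_3.trans h13_2.symm⟩
end

section
/- For all n, the number of permutations of [n] avoiding both generalized patterns 1-23 and 3-12 equals b_n, where b_0 = b_1 = 1 and b_{n+2} = b_{n+1} + Σ_{k=0}^{n} binom(n,k) b_k. -/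
def contains312 {n : ℕ} (π : Equiv.Perm (Fin n)) : Prop :=
  ∃ i j : ℕ, ∃ (_ : i < j) (hj : j + 1 < n),
    π ⟨j, by omega⟩ < π ⟨j + 1, hj⟩ ∧ π ⟨j + 1, hj⟩ < π ⟨i, by omega⟩

def b : ℕ → ℕ
  | 0 => 1
  | 1 => 1
  | n + 2 => b (n + 1) + ∑ k ∈ (Finset.range (n + 1)).attach,
      Nat.choose n k * b k
  decreasing_by
  · exact Nat.lt_succ_self (n + 1)
  · have := Finset.mem_range.mp k.2; omega

/-!
A permutation avoids both patterns exactly when, at each of its ascents, all earlier letters lie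
strictly between the two letters of the ascent. Look at the smallest letter `m`. No ascent can
come after the letter following `m`, since it would not enclose `m`. So either `m` is the last
letter, and may be removed, or `m` is followed by the top of an ascent; that letter must then be
the largest one, `M`, and the permutation reads `σ m M τ` with `τ` decreasing and `σ` an arbitrary
word of the same kind on any subset of the remaining letters. Counting the two cases gives the
recursion for `b`.
-/

/-- A word in which every descent `y, x` strictly encloses all the letters after it. For words
without repetition these are the reversals of the words avoiding `1-23` and `3-12`; reversing
turns the condition on the letters before an ascent into a recursion along the list. -/
def EnclosingDescents {α : Type*} [LinearOrder α] : List α → Prop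
  | y :: x :: l => (x < y → ∀ z ∈ l, z ∈ Set.Ioo x y) ∧ EnclosingDescents (x :: l)
  | _ => True

open Classical in
/-- The words with enclosing descents that use each letter of `S` exactly once. -/
noncomputable def enclosingWords {α : Type*} [LinearOrder α] (S : Finset α) : Finset (List α) :=
  S.val.lists.toFinset.filter EnclosingDescents

section Words

variable {α : Type*} [LinearOrder α] {m M x y : α} {l σ τ : List α} {S T U : Finset α}

theorem enclosingDescents_cons_iff_of_le (h : ∀ z ∈ l, y ≤ z) :
    EnclosingDescents (y :: l) ↔ EnclosingDescents l := by
  cases l with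
  | nil => simp only [EnclosingDescents]
  | cons x l =>
    have hyx : ¬ x < y := (h x List.mem_cons_self).not_gt
    simp only [EnclosingDescents, hyx, false_imp_iff, true_and]

theorem enclosingDescents_cons_cons_iff_of_mem (hm : m ∈ l) (hx : m ≤ x) :
    EnclosingDescents (y :: x :: l) ↔ y ≤ x ∧ EnclosingDescents (x :: l) := by
  have hyx : (x < y → ∀ z ∈ l, z ∈ Set.Ioo x y) ↔ y ≤ x :=
    ⟨fun h => not_lt.1 fun hxy => hx.not_gt (h hxy m hm).1, fun h hxy => absurd h hxy.not_ge⟩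
  rw [EnclosingDescents, hyx]

theorem enclosingDescents_append_cons_iff (hm : m ∈ σ) (hy : m ≤ y) (hτ : ∀ z ∈ τ, m ≤ z) :
    EnclosingDescents (τ ++ y :: σ) ↔ (τ ++ [y]).SortedLE ∧ EnclosingDescents (y :: σ) := by
  simp only [List.sortedLE_iff_isChain]
  induction τ with
  | nil => simp
  | cons a τ ih =>
    obtain ⟨-, hτ⟩ := List.forall_mem_cons.1 hτ
    specialize ih hτ
    cases τ with
    | nil => simpa using enclosingDescents_cons_cons_iff_of_mem hm hy
    | cons c τ =>
      have hc : m ≤ c := hτ c List.mem_cons_self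
      simp only [List.cons_append, List.isChain_cons_cons, and_assoc] at ih ⊢
      rw [enclosingDescents_cons_cons_iff_of_mem (by simp [hm]) hc, ih]

theorem enclosingDescents_append_cons_cons_iff (hmy : m < y) (hτ : ∀ z ∈ τ, m ≤ z) :
    EnclosingDescents (τ ++ y :: m :: σ) ↔
      (τ ++ [y]).SortedLE ∧ (∀ z ∈ σ, z ∈ Set.Ioo m y) ∧ EnclosingDescents σ := by
  rw [enclosingDescents_append_cons_iff List.mem_cons_self hmy.le hτ, EnclosingDescents,
    and_congr_right_iff]
  simp only [hmy, true_imp_iff, and_congr_right_iff]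
  exact fun _ hσ => enclosingDescents_cons_iff_of_le fun z hz => (hσ z hz).1.le

theorem enclosingDescents_reverse_ofFn_iff : ∀ {n : ℕ} (f : Fin n → α),
    EnclosingDescents (List.ofFn f).reverse ↔ ∀ (i j : ℕ) (_ : i < j) (hj : j + 1 < n),
      f ⟨j, by omega⟩ < f ⟨j + 1, hj⟩ →
        f ⟨i, by omega⟩ ∈ Set.Ioo (f ⟨j, by omega⟩) (f ⟨j + 1, hj⟩)
  | 0, f => by simp [EnclosingDescents]
  | 1, f => by simp [EnclosingDescents]
  | n + 2, f => by
    have ih := enclosingDescents_reverse_ofFn_iff fun i : Fin (n + 1) => f i.castSucc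
    rw [List.ofFn_succ', List.concat_eq_append, List.reverse_concat] at ih
    simp only [List.ofFn_succ', List.concat_eq_append, List.reverse_concat, EnclosingDescents, ih,
      List.mem_reverse, List.mem_ofFn, forall_exists_index, forall_apply_eq_imp_iff]
    constructor
    · rintro ⟨hlast, hinit⟩ i j hij hj hlt
      obtain rfl | hjn := (show j ≤ n by omega).eq_or_lt
      · exact hlast hlt ⟨i, hij⟩
      · exact hinit i j hij (by omega) hlt
    · intro h
      exact ⟨fun hlt i => h i n i.isLt (by omega) hlt,
        fun i j hij hj hlt => h i j hij (by omega) hlt⟩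

theorem mem_enclosingWords :
    l ∈ enclosingWords S ↔ (l : Multiset α) = S.val ∧ EnclosingDescents l := by
  simp only [enclosingWords, Finset.mem_filter, Multiset.mem_toFinset, Multiset.mem_lists_iff,
    Multiset.quot_mk_to_coe, eq_comm]

theorem mem_biUnion_powerset_enclosingWords :
    σ ∈ U.powerset.biUnion enclosingWords ↔
      σ.Nodup ∧ σ.toFinset ⊆ U ∧ EnclosingDescents σ := by
  simp only [Finset.mem_biUnion, Finset.mem_powerset, mem_enclosingWords]
  constructor
  · rintro ⟨T, hTU, hσT, hσ⟩
    have hnodup : σ.Nodup := Multiset.coe_nodup.1 (hσT ▸ T.nodup)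
    have hT : σ.toFinset = T :=
      Finset.val_injective (by rw [← hσT, List.toFinset_val, hnodup.dedup])
    exact ⟨hnodup, hT ▸ hTU, hσ⟩
  · rintro ⟨hnodup, hσU, hσ⟩
    exact ⟨σ.toFinset, hσU, by rw [List.toFinset_val, hnodup.dedup], hσ⟩

theorem pairwiseDisjoint_enclosingWords (s : Set (Finset α)) :
    s.PairwiseDisjoint enclosingWords := by
  refine fun S _ T _ hST => Finset.disjoint_left.2 fun l hS hT => hST (Finset.val_injective ?_)
  rw [← (mem_enclosingWords.1 hS).1, (mem_enclosingWords.1 hT).1]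

theorem sortedLE_and_coe_add_coe_eq_val_iff :
    τ.SortedLE ∧ (τ + σ : Multiset α) = U.val ↔
      σ.Nodup ∧ σ.toFinset ⊆ U ∧ (U \ σ.toFinset).sort = τ := by
  constructor
  · rintro ⟨hτ, hU⟩
    have hnodup : σ.Nodup := by
      have hτσ : (τ + σ : Multiset α).Nodup := hU ▸ U.nodup
      exact Multiset.coe_nodup.1 (Multiset.nodup_add.1 hτσ).2.1
    have hσ : σ.toFinset.val = σ := by rw [List.toFinset_val, hnodup.dedup]
    refine ⟨hnodup, ?_, List.Perm.eq_of_sortedLE (Finset.sortedLT_sort _).sortedLE hτ ?_⟩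
    · rw [← Finset.val_le_iff, hσ, ← hU]
      exact Multiset.le_add_left _ _
    · rw [← Multiset.coe_eq_coe, Finset.sort_eq, Finset.sdiff_val, hσ, ← hU, add_tsub_cancel_right]
  · rintro ⟨hnodup, hσU, rfl⟩
    have hσ : σ.toFinset.val = σ := by rw [List.toFinset_val, hnodup.dedup]
    refine ⟨(Finset.sortedLT_sort _).sortedLE, ?_⟩
    rw [Finset.sort_eq, Finset.sdiff_val, hσ, tsub_add_cancel_of_le]
    exact hσ ▸ Finset.val_le_iff.2 hσU

theorem enclosingWords_empty : enclosingWords (∅ : Finset α) = {[]} := by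
  ext l
  simp +contextual [mem_enclosingWords, EnclosingDescents]

theorem enclosingWords_singleton (a : α) : enclosingWords {a} = {[a]} := by
  ext l
  simp +contextual [mem_enclosingWords, EnclosingDescents]

theorem cons_mem_enclosingWords_insert_iff (hm : ∀ z ∈ S, m < z) :
    m :: l ∈ enclosingWords (insert m S) ↔ l ∈ enclosingWords S := by
  have hmS : m ∉ S := fun h => (hm m h).false
  rw [mem_enclosingWords, mem_enclosingWords, Finset.insert_val_of_notMem hmS,
    ← Multiset.cons_coe, Multiset.cons_inj_right, and_congr_right_iff]
  refine fun hl => enclosingDescents_cons_iff_of_le fun z hz => (hm z ?_).le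
  rwa [← Finset.mem_val, ← hl]

theorem append_extremes_mem_enclosingWords_iff (hmM : m < M) (hU : ∀ z ∈ U, z ∈ Set.Ioo m M) :
    τ ++ M :: m :: σ ∈ enclosingWords (insert m (insert M U)) ↔
      τ.SortedLE ∧ (τ + σ : Multiset α) = U.val ∧ EnclosingDescents σ := by
  have hM : M ∉ U := fun h => (hU M h).2.false
  have hm : m ∉ insert M U := by
    rw [Finset.mem_insert, not_or]
    exact ⟨hmM.ne, fun h => (hU m h).1.false⟩
  have hcoe : ((τ ++ M :: m :: σ : List α) : Multiset α) = m ::ₘ M ::ₘ (τ + σ) := by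
    rw [← Multiset.coe_add, ← Multiset.cons_coe, ← Multiset.cons_coe, Multiset.add_cons,
      Multiset.add_cons, Multiset.cons_swap]
  rw [mem_enclosingWords, hcoe, Finset.insert_val_of_notMem hm, Finset.insert_val_of_notMem hM,
    Multiset.cons_inj_right, Multiset.cons_inj_right, and_left_comm, and_congr_right_iff]
  intro hτσ
  have hmem : ∀ z, z ∈ τ ∨ z ∈ σ → z ∈ Set.Ioo m M := fun z hz =>
    hU z (by rwa [← Finset.mem_val, ← hτσ, Multiset.mem_add])
  have hsorted : (τ ++ [M]).SortedLE ↔ τ.SortedLE := by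
    simp only [List.sortedLE_iff_pairwise, List.pairwise_append, List.pairwise_singleton,
      List.mem_singleton, forall_eq, true_and, and_iff_left_iff_imp]
    exact fun _ z hz => (hmem z (Or.inl hz)).2.le
  rw [enclosingDescents_append_cons_cons_iff hmM fun z hz => (hmem z (Or.inl hz)).1.le, hsorted,
    and_iff_right fun z hz => hmem z (Or.inr hz)]

/-- The word that lists the letters of `U` not in `σ` in increasing order, followed by `M`, `m` and
`σ`: the only completion of `M m σ` to a word with enclosing descents on `U ∪ {m, M}`. -/
def spliceExtremes (U : Finset α) (m M : α) (σ : List α) : List α :=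
  (U \ σ.toFinset).sort ++ M :: m :: σ

theorem append_extremes_mem_enclosingWords_iff_spliceExtremes_eq (hmM : m < M)
    (hU : ∀ z ∈ U, z ∈ Set.Ioo m M) :
    τ ++ M :: m :: σ ∈ enclosingWords (insert m (insert M U)) ↔
      σ ∈ U.powerset.biUnion enclosingWords ∧ spliceExtremes U m M σ = τ ++ M :: m :: σ := by
  rw [append_extremes_mem_enclosingWords_iff hmM hU, ← and_assoc,
    sortedLE_and_coe_add_coe_eq_val_iff, mem_biUnion_powerset_enclosingWords, spliceExtremes,
    List.append_cancel_right_eq]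
  tauto

theorem eq_max_of_append_cons_cons_mem_enclosingWords (hmM : m < M)
    (hU : ∀ z ∈ U, z ∈ Set.Ioo m M)
    (h : τ ++ y :: m :: σ ∈ enclosingWords (insert m (insert M U))) : y = M := by
  obtain ⟨hl, hdesc⟩ := mem_enclosingWords.1 h
  have hmem : ∀ z, z ∈ τ ++ y :: m :: σ ↔ z ∈ insert m (insert M U) := fun z => by
    rw [← Multiset.mem_coe, hl, Finset.mem_val]
  have hrange : ∀ z ∈ τ ++ y :: m :: σ, m ≤ z ∧ z ≤ M := fun z hz => by
    obtain rfl | rfl | hz := by simpa only [Finset.mem_insert] using (hmem z).1 hz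
    · exact ⟨le_rfl, hmM.le⟩
    · exact ⟨hmM.le, le_rfl⟩
    · exact ⟨(hU z hz).1.le, (hU z hz).2.le⟩
  have hnodup : (τ ++ y :: m :: σ).Nodup := Multiset.coe_nodup.1 (hl ▸ Finset.nodup _)
  have hmy : m < y := by
    refine (hrange y (by simp)).1.lt_of_ne ?_
    rintro rfl
    simp [List.nodup_append] at hnodup
  obtain ⟨hsorted, hσ, -⟩ := (enclosingDescents_append_cons_cons_iff hmy fun z hz =>
    (hrange z (List.mem_append_left _ hz)).1).1 hdesc
  refine (hrange y (by simp)).2.antisymm ?_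
  have hM : M ∈ τ ∨ M = y ∨ M = m ∨ M ∈ σ := by simpa using (hmem M).2 (by simp)
  obtain hM | rfl | rfl | hM := hM
  · exact (List.pairwise_append.1 hsorted.pairwise).2.2 M hM y (by simp)
  · exact le_rfl
  · exact hmy.le
  · exact (hσ M hM).2.le

theorem enclosingWords_insert_insert (hmM : m < M) (hU : ∀ z ∈ U, z ∈ Set.Ioo m M) :
    enclosingWords (insert m (insert M U)) =
      (enclosingWords (insert M U)).image (m :: ·) ∪
        (U.powerset.biUnion enclosingWords).image (spliceExtremes U m M) := by
  have hm : ∀ z ∈ insert M U, m < z :=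
    (Finset.forall_mem_insert _ _ _).2 ⟨hmM, fun z hz => (hU z hz).1⟩
  ext l
  rw [Finset.mem_union, Finset.mem_image, Finset.mem_image]
  constructor
  · intro hl
    have hml : m ∈ l := by
      rw [← Multiset.mem_coe, (mem_enclosingWords.1 hl).1]
      exact Finset.mem_insert_self _ _
    obtain ⟨τ, σ, rfl⟩ := List.append_of_mem hml
    obtain rfl | ⟨τ, y, rfl⟩ := List.eq_nil_or_concat' τ
    · exact Or.inl ⟨σ, (cons_mem_enclosingWords_insert_iff hm).1 hl, rfl⟩
    · rw [List.append_assoc, List.singleton_append] at hl ⊢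
      obtain rfl := eq_max_of_append_cons_cons_mem_enclosingWords hmM hU hl
      exact Or.inr
        ⟨σ, (append_extremes_mem_enclosingWords_iff_spliceExtremes_eq hmM hU).1 hl⟩
  · rintro (⟨σ, hσ, rfl⟩ | ⟨σ, hσ, rfl⟩)
    · exact (cons_mem_enclosingWords_insert_iff hm).2 hσ
    · exact (append_extremes_mem_enclosingWords_iff_spliceExtremes_eq hmM hU).2 ⟨hσ, rfl⟩

theorem disjoint_image_cons_image_spliceExtremes (hmM : m ≠ M) (hm : m ∉ U)
    (s t : Finset (List α)) :
    Disjoint (s.image (m :: ·)) (t.image (spliceExtremes U m M)) := by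
  simp only [Finset.disjoint_left, Finset.mem_image, not_exists, not_and, forall_exists_index,
    and_imp, forall_apply_eq_imp_iff₂, spliceExtremes]
  intro l _ σ _ h
  obtain ⟨-, hcons⟩ | ⟨τ, hτ, -⟩ := List.append_eq_cons_iff.1 h
  · exact hmM.symm (List.cons.inj hcons).1
  · have hmsort : m ∈ (U \ σ.toFinset).sort := hτ ▸ List.mem_cons_self
    exact hm (Finset.mem_sdiff.1 ((Finset.mem_sort _).1 hmsort)).1

theorem spliceExtremes_injOn (hmM : m ≠ M) (hM : M ∉ U) :
    Set.InjOn (spliceExtremes U m M) (U.powerset.biUnion enclosingWords) := by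
  intro σ hσ σ' _ h
  have hMσ : M ∉ m :: σ := by
    have hσU := (mem_biUnion_powerset_enclosingWords.1 (Finset.mem_coe.1 hσ)).2.1
    rw [List.mem_cons, not_or]
    exact ⟨hmM.symm, fun h => hM (hσU (List.mem_toFinset.2 h))⟩
  have hMsort : M ∉ (U \ σ.toFinset).sort := fun h =>
    hM (Finset.mem_sdiff.1 ((Finset.mem_sort _).1 h)).1
  exact (List.cons.inj ((List.append_cons_inj_of_notMem hMsort hMσ).1 h).2.2).2

theorem card_enclosingWords_insert_insert (hmM : m < M) (hU : ∀ z ∈ U, z ∈ Set.Ioo m M) :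
    (enclosingWords (insert m (insert M U))).card =
      (enclosingWords (insert M U)).card + ∑ T ∈ U.powerset, (enclosingWords T).card := by
  have hm : m ∉ U := fun h => (hU m h).1.false
  have hM : M ∉ U := fun h => (hU M h).2.false
  rw [enclosingWords_insert_insert hmM hU,
    Finset.card_union_of_disjoint (disjoint_image_cons_image_spliceExtremes hmM.ne hm _ _),
    Finset.card_image_of_injective _ List.cons_injective,
    Finset.card_image_of_injOn (spliceExtremes_injOn hmM.ne hM),
    Finset.card_biUnion (pairwiseDisjoint_enclosingWords _)]

theorem exists_eq_insert_insert_of_one_lt_card (hS : 1 < S.card) :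
    ∃ m M U, m < M ∧ (∀ z ∈ U, z ∈ Set.Ioo m M) ∧ insert m (insert M U) = S := by
  have hne : S.Nonempty := Finset.card_pos.1 (by omega)
  have hlt : S.min' hne < S.max' hne := Finset.min'_lt_max'_of_card S hS
  refine ⟨S.min' hne, S.max' hne, (S.erase (S.min' hne)).erase (S.max' hne), hlt,
    fun z hz => ?_, ?_⟩
  · obtain ⟨hzM, hzm, hzS⟩ := by simpa only [Finset.mem_erase] using hz
    exact ⟨(S.min'_le z hzS).lt_of_ne' hzm, (S.le_max' z hzS).lt_of_ne hzM⟩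
  · rw [Finset.insert_erase (Finset.mem_erase.2 ⟨hlt.ne', S.max'_mem hne⟩),
      Finset.insert_erase (S.min'_mem hne)]

theorem b_add_two (n : ℕ) :
    b (n + 2) = b (n + 1) + ∑ k ∈ Finset.range (n + 1), n.choose k * b k := by
  rw [b, Finset.sum_attach (Finset.range (n + 1)) fun k => n.choose k * b k]

theorem card_enclosingWords (S : Finset α) : (enclosingWords S).card = b S.card := by
  induction hn : S.card using Nat.strong_induction_on generalizing S with
  | _ n ih =>
    match n with
    | 0 => rw [Finset.card_eq_zero.1 hn, enclosingWords_empty, Finset.card_singleton, b]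
    | 1 =>
      obtain ⟨a, rfl⟩ := Finset.card_eq_one.1 hn
      rw [enclosingWords_singleton, Finset.card_singleton, b]
    | n + 2 =>
      obtain ⟨m, M, U, hmM, hU, rfl⟩ := exists_eq_insert_insert_of_one_lt_card (S := S) (by omega)
      have hM : (insert M U).card = U.card + 1 :=
        Finset.card_insert_of_notMem fun h => (hU M h).2.false
      have hm : (insert m (insert M U)).card = (insert M U).card + 1 := by
        refine Finset.card_insert_of_notMem fun h => ?_
        obtain h | h := Finset.mem_insert.1 h
        exacts [hmM.ne h, (hU m h).1.false]
      have hUn : U.card = n := by omega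
      have hsub : ∀ T ∈ U.powerset, (enclosingWords T).card = b T.card := fun T hT =>
        ih _ (by have := Finset.card_le_card (Finset.mem_powerset.1 hT); omega) T rfl
      rw [card_enclosingWords_insert_insert hmM hU, b_add_two, ih (n + 1) (by omega) _ (by omega),
        Finset.sum_congr rfl hsub, Finset.sum_powerset_apply_card, hUn]
      simp only [smul_eq_mul]

end Words

section Permutations

variable {n : ℕ}

theorem not_contains123_and_not_contains312_iff (π : Equiv.Perm (Fin n)) :
    ¬ contains123 π ∧ ¬ contains312 π ↔ EnclosingDescents (List.ofFn π).reverse := by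
  rw [enclosingDescents_reverse_ofFn_iff]
  constructor
  · rintro ⟨h123, h312⟩ i j hij hj hlt
    have hne : ∀ k (hk : k < n), i ≠ k → π ⟨i, by omega⟩ ≠ π ⟨k, hk⟩ := fun k hk hik h =>
      hik (Fin.mk.inj (π.injective h))
    have hj_le := not_lt.1 fun h => h123 ⟨i, j, hij, hj, h, hlt⟩
    have hle_succ := not_lt.1 fun h => h312 ⟨i, j, hij, hj, hlt, h⟩
    exact ⟨hj_le.lt_of_ne' (hne j _ (by omega)), hle_succ.lt_of_ne (hne (j + 1) _ (by omega))⟩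
  · intro h
    exact ⟨fun ⟨i, j, hij, hj, hi, hlt⟩ => (h i j hij hj hlt).1.not_gt hi,
      fun ⟨i, j, hij, hj, hlt, hi⟩ => (h i j hij hj hlt).2.not_gt hi⟩

theorem coe_ofFn_eq_univ_val_iff {f : Fin n → Fin n} :
    (List.ofFn f : Multiset (Fin n)) = (Finset.univ : Finset (Fin n)).val ↔ f.Bijective := by
  constructor
  · intro h
    have hnodup : (List.ofFn f).Nodup := Multiset.coe_nodup.1 (h ▸ Finset.univ.nodup)
    exact Finite.injective_iff_bijective.1 (List.nodup_ofFn.1 hnodup)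
  · intro hf
    rw [← Fin.univ_val_map]
    exact Multiset.map_univ_val_equiv (Equiv.ofBijective f hf)

theorem bijOn_reverse_ofFn :
    Set.BijOn (fun π : Equiv.Perm (Fin n) => (List.ofFn π).reverse)
      {π | ¬ contains123 π ∧ ¬ contains312 π} (enclosingWords (Finset.univ : Finset (Fin n))) := by
  refine ⟨fun π hπ => ?_, fun π _ ρ _ h => ?_, fun l hl => ?_⟩
  · rw [Finset.mem_coe, mem_enclosingWords, Multiset.coe_reverse, coe_ofFn_eq_univ_val_iff]
    exact ⟨π.bijective, (not_contains123_and_not_contains312_iff π).1 hπ⟩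
  · exact DFunLike.coe_injective (List.ofFn_injective (List.reverse_injective h))
  · obtain ⟨hl, hdesc⟩ := mem_enclosingWords.1 hl
    have hlen : l.reverse.length = n := by
      rw [← Multiset.coe_card, Multiset.coe_reverse, hl, Finset.card_val, Finset.card_fin]
    obtain ⟨f, hf⟩ : ∃ f : Fin n → Fin n, List.ofFn f = l.reverse :=
      ⟨fun i => l.reverse[i], List.ext_getElem (by simp [hlen]) (by simp)⟩
    obtain rfl := List.reverse_eq_iff.1 hf.symm
    rw [Multiset.coe_reverse, coe_ofFn_eq_univ_val_iff] at hl
    exact ⟨Equiv.ofBijective f hl, (not_contains123_and_not_contains312_iff _).2 hdesc, rfl⟩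

end Permutations

theorem stmt15 (n : ℕ) :
    Nat.card {π : Equiv.Perm (Fin n) // ¬ contains123 π ∧ ¬ contains312 π} = b n := by
  calc Nat.card {π : Equiv.Perm (Fin n) // ¬ contains123 π ∧ ¬ contains312 π}
      = Nat.card (enclosingWords (Finset.univ : Finset (Fin n))) :=
        Nat.card_congr bijOn_reverse_ofFn.equiv
    _ = (enclosingWords (Finset.univ : Finset (Fin n))).card := Nat.card_eq_finsetCard _
    _ = b n := by rw [card_enclosingWords, Finset.card_fin]
end

section
/- The ordinary generating function Σ_{n≥0} a_n x^n of the numbers a_n of strongly monotone partitions of [n] satisfies Σ a_n x^n = 1/(1 − x − x²·B*(x)), where B*(x) = Σ_{n≥0} B*_n x^n is the generating function of the Bessel numbers (counting non-overlapping partitions). -/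
def StronglyMonotonePartition {n : ℕ} (P : Finpartition (Finset.univ : Finset (Fin n))) : Prop :=
  ∀ A ∈ P.parts, ∀ B ∈ P.parts, A.min < B.min → A.max < B.max

def NonOverlappingPartition {n : ℕ} (P : Finpartition (Finset.univ : Finset (Fin n))) : Prop :=
  ∀ A ∈ P.parts, ∀ B ∈ P.parts, ¬ (A.min < B.min ∧ B.min < A.max ∧ A.max < B.max)

noncomputable def a (n : ℕ) : ℕ :=
  Nat.card {P : Finpartition (Finset.univ : Finset (Fin n)) // StronglyMonotonePartition P}

noncomputable def bessel (n : ℕ) : ℕ :=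
  Nat.card {P : Finpartition (Finset.univ : Finset (Fin n)) // NonOverlappingPartition P}

/-!
Read a partition of `[n]` from left to right and keep track of the set of open blocks, those that
have been started but not yet finished. If `h` blocks are open, the next element opens a new block,
continues one of the `h` open blocks, is a singleton, or closes an open block. A partition is
strongly monotone when only the oldest open block may be closed, a singleton being allowed only if
no block is open; it is non-overlapping when only the youngest open block may be closed, singletons
always being allowed. So both families are counted by Motzkin paths (Flajolet's path-encoding), with
level steps at height `h` weighted by `max h 1` and by `h + 1` respectively. The second weight is
the first one shifted by one level, so decomposing a path at its first return to height `0` gives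
the identity.
-/

open Finset

namespace PartitionHistory

section Motzkin

variable {S : Type*} [CommSemiring S]

/-- The total weight of the Motzkin paths that lead from height `h` to height `0` in a given number
of steps. Up steps have weight `1`, a level step at height `h` has weight `b h`, and a down step
from height `h + 1` to height `h` has weight `lam h`. -/
def motzkinWeight (b lam : ℕ → S) : ℕ → ℕ → S
  | 0, h => if h = 0 then 1 else 0
  | k + 1, 0 => motzkinWeight b lam k 1 + b 0 * motzkinWeight b lam k 0
  | k + 1, h + 1 => motzkinWeight b lam k (h + 2) + b (h + 1) * motzkinWeight b lam k (h + 1) +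
      lam h * motzkinWeight b lam k h

theorem motzkinWeight_succ_succ (b lam : ℕ → S) (k h : ℕ) :
    motzkinWeight b lam (k + 1) (h + 1) =
      motzkinWeight b lam k (h + 2) + b (h + 1) * motzkinWeight b lam k (h + 1) +
        lam h * motzkinWeight b lam k h := by
  rw [motzkinWeight]

-- A path from height `h + 1` splits at its first visit to height `0`.
theorem motzkinWeight_succ_succ_eq_sum_antidiagonal (b lam : ℕ → S) (k h : ℕ) :
    motzkinWeight b lam (k + 1) (h + 1) =
      ∑ p ∈ antidiagonal k, motzkinWeight (fun i => b (i + 1)) (fun i => lam (i + 1)) p.1 h *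
        (lam 0 * motzkinWeight b lam p.2 0) := by
  induction k generalizing h with
  | zero => cases h <;> simp [motzkinWeight]
  | succ k ih =>
    rw [Nat.sum_antidiagonal_succ]
    cases h with
    | zero =>
      rw [motzkinWeight_succ_succ, ih, ih]
      simp only [motzkinWeight, add_mul, mul_assoc, sum_add_distrib, mul_sum, if_true, zero_add]
      ring
    | succ h =>
      rw [motzkinWeight_succ_succ, ih, ih, ih]
      simp only [motzkinWeight, add_mul, mul_assoc, sum_add_distrib, mul_sum, Nat.succ_ne_zero,
        if_false]
      ring

theorem mk_motzkinWeight_zero_eq (b lam : ℕ → S) :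
    PowerSeries.mk (motzkinWeight b lam · 0) =
      1 + PowerSeries.X * (PowerSeries.C (b 0) * PowerSeries.mk (motzkinWeight b lam · 0) +
        PowerSeries.X *
          (PowerSeries.mk (motzkinWeight (fun i => b (i + 1)) (fun i => lam (i + 1)) · 0) *
            (PowerSeries.C (lam 0) * PowerSeries.mk (motzkinWeight b lam · 0)))) := by
  ext n
  rcases n with _ | _ | k
  · simp [motzkinWeight]
  · simp [motzkinWeight, PowerSeries.coeff_one, PowerSeries.coeff_succ_X_mul]
  · simp only [PowerSeries.coeff_mk, map_add, PowerSeries.coeff_one, PowerSeries.coeff_succ_X_mul,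
      PowerSeries.coeff_C_mul, Nat.succ_ne_zero, if_false, zero_add]
    rw [PowerSeries.coeff_mul, motzkinWeight, motzkinWeight_succ_succ_eq_sum_antidiagonal, add_comm]
    simp only [PowerSeries.coeff_mk, PowerSeries.coeff_C_mul]

end Motzkin

section Steps

/-- The steps available when the element `t` is read and `o` is the set of open blocks, each block
being labelled by its least element. The step `(l, e)` puts `t` into the block labelled `l`, which
is a new block if `l = t`, and closes that block if `e = true`; closing is allowed only if `R l x`
holds for all open blocks `x`. -/
def steps (R : ℕ → ℕ → Prop) [DecidableRel R] (t : ℕ) (o : Finset ℕ) : Finset (ℕ × Bool) :=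
  {c ∈ insert t o ×ˢ univ | c.2 = true → ∀ x ∈ o, R c.1 x}

/-- The set of open blocks after the step `c`, if `o` is the set of open blocks before it. -/
def advance (o : Finset ℕ) (c : ℕ × Bool) : Finset ℕ :=
  if c.2 then o.erase c.1 else insert c.1 o

variable {R : ℕ → ℕ → Prop} [DecidableRel R] {t : ℕ} {o : Finset ℕ} {c : ℕ × Bool}

theorem mem_steps :
    c ∈ steps R t o ↔ (c.1 = t ∨ c.1 ∈ o) ∧ (c.2 = true → ∀ x ∈ o, R c.1 x) := by
  simp [steps]

theorem card_filter_forall_rel_eq_one {α : Type*} (r : α → α → Prop) [IsLinearOrder α r]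
    [DecidableRel r] {s : Finset α} (hs : s.Nonempty) : #{l ∈ s | ∀ x ∈ s, r l x} = 1 := by
  obtain ⟨m, hm, hmin⟩ : ∃ m ∈ s, ∀ x ∈ s, r m x := by
    induction hs using Finset.Nonempty.cons_induction with
    | singleton a => exact ⟨a, by simp, by simpa using refl_of r a⟩
    | cons a s ha _ ih =>
      obtain ⟨m, hm, hmin⟩ := ih
      rcases total_of r a m with ham | hma
      · exact ⟨a, by simp, by simpa using ⟨refl_of r a, fun x hx => trans_of r ham (hmin x hx)⟩⟩
      · exact ⟨m, by simp [hm], by simpa using ⟨hma, hmin⟩⟩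
  refine card_eq_one.2 ⟨m, ?_⟩
  ext l
  simp only [mem_filter, mem_singleton]
  exact ⟨fun h => antisymm_of r (h.2 m hm) (hmin l h.1), fun h => h ▸ ⟨hm, hmin⟩⟩

theorem sum_steps (ht : t ∉ o) (f : ℕ → ℕ) :
    ∑ c ∈ steps R t o, f #(advance o c) =
      f (#o + 1) + (#o + if ∀ x ∈ o, R t x then 1 else 0) * f #o +
        #{l ∈ o | ∀ x ∈ o, R l x} * f (#o - 1) := by
  have hopen : ∑ l ∈ insert t o, f #(insert l o) = f (#o + 1) + #o * f #o := by
    rw [sum_insert ht, card_insert_of_notMem ht,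
      sum_congr rfl fun l hl => by rw [insert_eq_of_mem hl], sum_const, smul_eq_mul]
  have hclose : ∑ l ∈ insert t o, (if ∀ x ∈ o, R l x then f #(o.erase l) else 0) =
      (if ∀ x ∈ o, R t x then f #o else 0) + #{l ∈ o | ∀ x ∈ o, R l x} * f (#o - 1) := by
    rw [sum_insert ht, erase_eq_of_notMem ht, ← sum_filter,
      sum_congr rfl fun l hl => by rw [card_erase_of_mem (mem_filter.1 hl).1], sum_const,
      smul_eq_mul]
  simp only [steps, sum_filter, sum_product, Fintype.sum_bool, sum_add_distrib, advance, if_true,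
    forall_true_left, Bool.false_eq_true, IsEmpty.forall_iff, if_false, hopen, hclose]
  split_ifs <;> ring

theorem sum_steps_motzkinWeight [IsLinearOrder ℕ R] {b : ℕ → ℕ} (ht : t ∉ o)
    (hb : b #o = #o + if ∀ x ∈ o, R t x then 1 else 0) (k : ℕ) :
    ∑ c ∈ steps R t o, motzkinWeight b 1 k #(advance o c) = motzkinWeight b 1 (k + 1) #o := by
  rw [sum_steps ht, ← hb]
  rcases o.eq_empty_or_nonempty with rfl | ho
  · simp [motzkinWeight]
  · obtain ⟨h, hh⟩ := Nat.exists_eq_succ_of_ne_zero ho.card_ne_zero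
    simp [card_filter_forall_rel_eq_one R ho, hh, motzkinWeight]

end Steps

section Histories

/-- The labels of the blocks that are open just before time `t` in the word of steps `s`: those used
before time `t` and not closed before time `t`. -/
def openAt {n : ℕ} (s : Fin n → ℕ × Bool) (t : ℕ) : Finset ℕ :=
  {x ∈ range t | (∃ u : Fin n, u < t ∧ (s u).1 = x) ∧ ∀ u : Fin n, u < t → s u ≠ (x, true)}

/-- A history is a word of steps each of which is available at its time. Blocks may remain open at
the end. -/
def IsHistory (R : ℕ → ℕ → Prop) [DecidableRel R] {n : ℕ} (s : Fin n → ℕ × Bool) : Prop :=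
  ∀ t : Fin n, s t ∈ steps R t (openAt s t)

/-- The histories of length `n`. -/
def histories (R : ℕ → ℕ → Prop) [DecidableRel R] : ∀ n : ℕ, Finset (Fin n → ℕ × Bool)
  | 0 => univ
  | n + 1 => ((histories R n).sigma fun s => steps R n (openAt s n)).map
      ((Equiv.sigmaEquivProd _ _).trans <| (Equiv.prodComm _ _).trans <|
        Fin.snocEquiv fun _ => ℕ × Bool).toEmbedding

variable {R : ℕ → ℕ → Prop} [DecidableRel R] {n : ℕ} {s : Fin n → ℕ × Bool}

theorem mem_openAt {t x : ℕ} : x ∈ openAt s t ↔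
    x < t ∧ (∃ u : Fin n, u < t ∧ (s u).1 = x) ∧ ∀ u : Fin n, u < t → s u ≠ (x, true) := by
  simp [openAt]

theorem self_notMem_openAt (t : ℕ) : t ∉ openAt s t := fun h => (mem_openAt.1 h).1.false

theorem IsHistory.label_le (hs : IsHistory R s) (t : Fin n) : (s t).1 ≤ t :=
  (mem_steps.1 (hs t)).1.elim le_of_eq fun h => (mem_openAt.1 h).1.le

theorem openAt_snoc_of_le (c : ℕ × Bool) {t : ℕ} (ht : t ≤ n) :
    openAt (Fin.snoc s c : Fin (n + 1) → ℕ × Bool) t = openAt s t := by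
  ext x
  simp [mem_openAt, Fin.exists_fin_succ', Fin.forall_fin_succ', ht.not_gt]

theorem isHistory_snoc {c : ℕ × Bool} :
    IsHistory R (Fin.snoc s c : Fin (n + 1) → ℕ × Bool) ↔
      IsHistory R s ∧ c ∈ steps R n (openAt s n) := by
  simp [IsHistory, Fin.forall_fin_succ', openAt_snoc_of_le, Fin.is_le']

theorem mem_histories : s ∈ histories R n ↔ IsHistory R s := by
  induction n with
  | zero => exact iff_of_true (mem_univ s) fun t => t.elim0
  | succ n ih =>
    induction s using Fin.snocCases with | _ s c => ?_
    rw [histories, mem_map_equiv, isHistory_snoc, ← ih]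
    simp [Fin.snocEquiv]

theorem openAt_snoc_succ (hs : IsHistory R s) {c : ℕ × Bool} (hc : c ∈ steps R n (openAt s n)) :
    openAt (Fin.snoc s c : Fin (n + 1) → ℕ × Bool) (n + 1) = advance (openAt s n) c := by
  have hlabel (u : Fin n) : (s u).1 < n := (hs.label_le u).trans_lt u.2
  have hle : c.1 ≤ n := (mem_steps.1 hc).1.elim le_of_eq fun h => (mem_openAt.1 h).1.le
  have hnotClosed (u : Fin n) : s u ≠ (c.1, true) := by
    rcases (mem_steps.1 hc).1 with h | h
    · exact fun hu => (hlabel u).ne (by rw [hu, h])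
    · exact (mem_openAt.1 h).2.2 u u.2
  ext x
  obtain ⟨l, e⟩ := c
  cases e <;>
    simp only [advance, mem_openAt, Fin.exists_fin_succ', Fin.forall_fin_succ', Fin.snoc_castSucc,
      Fin.snoc_last, Fin.val_castSucc, Fin.val_last, Prod.mk.injEq, ne_eq, mem_insert, mem_erase,
      Bool.false_eq_true, if_false, if_true] <;>
    grind

theorem sum_histories_succ (f : ℕ → ℕ) :
    ∑ s ∈ histories R (n + 1), f #(openAt s (n + 1)) =
      ∑ s ∈ histories R n, ∑ c ∈ steps R n (openAt s n), f #(advance (openAt s n) c) := by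
  rw [histories, sum_map, sum_sigma]
  refine sum_congr rfl fun s hs => sum_congr rfl fun c hc => ?_
  exact congrArg (fun o => f #o) (openAt_snoc_succ (mem_histories.1 hs) hc)

theorem sum_histories_motzkinWeight [IsLinearOrder ℕ R] {b : ℕ → ℕ}
    (hb : ∀ t o, (∀ x ∈ o, x < t) → b #o = #o + if ∀ x ∈ o, R t x then 1 else 0) (n k : ℕ) :
    ∑ s ∈ histories R n, motzkinWeight b 1 k #(openAt s n) = motzkinWeight b 1 (n + k) 0 := by
  induction n generalizing k with
  | zero => simp [histories, openAt]
  | succ n ih =>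
    rw [sum_histories_succ, add_right_comm, add_assoc, ← ih]
    exact sum_congr rfl fun s _ => sum_steps_motzkinWeight (self_notMem_openAt n)
      (hb _ _ fun x hx => (mem_openAt.1 hx).1) k

theorem card_closed_histories [IsLinearOrder ℕ R] {b : ℕ → ℕ}
    (hb : ∀ t o, (∀ x ∈ o, x < t) → b #o = #o + if ∀ x ∈ o, R t x then 1 else 0) (n : ℕ) :
    #{s ∈ histories R n | openAt s n = ∅} = motzkinWeight b 1 n 0 := by
  rw [card_filter, ← add_zero n, ← sum_histories_motzkinWeight hb n 0]
  simp [motzkinWeight]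

theorem IsHistory.label_label (hs : IsHistory R s) (t : Fin n) :
    (s ⟨(s t).1, (hs.label_le t).trans_lt t.2⟩).1 = (s t).1 := by
  induction t using WellFoundedLT.induction with | ind t ih
  rcases (mem_steps.1 (hs t)).1 with hnew | hopen
  · exact congrArg (fun u => (s u).1) (Fin.ext hnew)
  · obtain ⟨-, ⟨u, hut, hu⟩, -⟩ := mem_openAt.1 hopen
    simpa only [hu] using ih u hut

theorem IsHistory.label_ne_of_closed (hs : IsHistory R s) {u v : Fin n} (huv : u < v)
    (hu : (s u).2 = true) : (s v).1 ≠ (s u).1 := by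
  intro hlabel
  rcases (mem_steps.1 (hs v)).1 with hnew | hopen
  · exact (hs.label_le u).not_gt (hlabel ▸ hnew ▸ huv)
  · exact (mem_openAt.1 hopen).2.2 u huv (Prod.ext hlabel.symm hu)

theorem IsHistory.exists_closing_step (hs : IsHistory R s) (hclosed : openAt s n = ∅) (t : Fin n) :
    ∃ u, s u = ((s t).1, true) := by
  by_contra! hne
  have hopen : (s t).1 ∈ openAt s n :=
    mem_openAt.2 ⟨(hs.label_le t).trans_lt t.2, ⟨t, t.2, rfl⟩, fun u _ => hne u⟩
  simp [hclosed] at hopen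

end Histories

section Blocks

variable {α : Type*} [Fintype α] [LinearOrder α] (P : Finpartition (univ : Finset α))

/-- The least element of the block of `i`. -/
def blockMin (i : α) : α := (P.part i).min' ⟨i, P.mem_part_self.2 (mem_univ i)⟩

/-- The greatest element of the block of `i`. -/
def blockMax (i : α) : α := (P.part i).max' ⟨i, P.mem_part_self.2 (mem_univ i)⟩

theorem mem_parts_iff_exists_part_eq {A : Finset α} : A ∈ P.parts ↔ ∃ i, P.part i = A := by
  constructor
  · intro hA
    obtain ⟨i, hi⟩ := P.nonempty_of_mem_parts hA
    exact ⟨i, P.part_eq_of_mem hA hi⟩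
  · rintro ⟨i, rfl⟩
    exact P.part_mem.2 (mem_univ i)

theorem mem_part_iff {i j : α} : i ∈ P.part j ↔ P.part i = P.part j :=
  P.mem_part_iff_part_eq_part (mem_univ i) (mem_univ j)

theorem isLeast_blockMin (i : α) : IsLeast (P.part i : Set α) (blockMin P i) := isLeast_min' _ _

theorem isGreatest_blockMax (i : α) : IsGreatest (P.part i : Set α) (blockMax P i) :=
  isGreatest_max' _ _

theorem blockMin_le (i : α) : blockMin P i ≤ i :=
  (isLeast_blockMin P i).2 (P.mem_part_self.2 (mem_univ i))

theorem le_blockMax (i : α) : i ≤ blockMax P i :=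
  (isGreatest_blockMax P i).2 (P.mem_part_self.2 (mem_univ i))

theorem part_blockMin (i : α) : P.part (blockMin P i) = P.part i :=
  (mem_part_iff P).1 (isLeast_blockMin P i).1

theorem part_blockMax (i : α) : P.part (blockMax P i) = P.part i :=
  (mem_part_iff P).1 (isGreatest_blockMax P i).1

variable {P}

theorem blockMin_eq_blockMin_iff {i j : α} :
    blockMin P i = blockMin P j ↔ P.part i = P.part j :=
  ⟨fun h => by rw [← part_blockMin P i, h, part_blockMin], fun h => by simp only [blockMin, h]⟩

theorem blockMax_eq_blockMax_iff {i j : α} :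
    blockMax P i = blockMax P j ↔ P.part i = P.part j :=
  ⟨fun h => by rw [← part_blockMax P i, h, part_blockMax], fun h => by simp only [blockMax, h]⟩

variable (P)

theorem blockMin_blockMax (i : α) : blockMin P (blockMax P i) = blockMin P i :=
  blockMin_eq_blockMin_iff.2 (part_blockMax P i)

theorem blockMax_blockMax (i : α) : blockMax P (blockMax P i) = blockMax P i :=
  blockMax_eq_blockMax_iff.2 (part_blockMax P i)

theorem min_part (i : α) : (P.part i).min = ((blockMin P i : α) : WithTop α) := (coe_min' _).symm

theorem max_part (i : α) : (P.part i).max = ((blockMax P i : α) : WithBot α) := (coe_max' _).symm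

/-- Whenever a block is closed, that is, when its greatest element is read from left to right, its
least element is in relation `R` to the least elements of all blocks started earlier and not closed
earlier. -/
def ClosesInOrder (R : α → α → Prop) : Prop :=
  ∀ i j, blockMin P j < blockMax P i → blockMax P i ≤ blockMax P j → R (blockMin P i) (blockMin P j)

end Blocks

section Families

variable {n : ℕ} {P : Finpartition (univ : Finset (Fin n))}

theorem stronglyMonotonePartition_iff_blockMin_lt :
    StronglyMonotonePartition P ↔
      ∀ i j, blockMin P i < blockMin P j → blockMax P i < blockMax P j := by
  simp only [StronglyMonotonePartition, mem_parts_iff_exists_part_eq, forall_exists_index,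
    forall_apply_eq_imp_iff, min_part, max_part, WithTop.coe_lt_coe, WithBot.coe_lt_coe]

theorem nonOverlappingPartition_iff_blockMin_lt :
    NonOverlappingPartition P ↔ ∀ i j, ¬ (blockMin P i < blockMin P j ∧
      blockMin P j < blockMax P i ∧ blockMax P i < blockMax P j) := by
  -- `min` lives in `WithTop` and `max` in `WithBot`; the definition of `NonOverlappingPartition`
  -- compares the two in the order of `WithTop`, since both types unfold to `Option`.
  have hcross (i j : Fin n) : (@LT.lt (WithTop (Fin n)) _ (P.part j).min (P.part i).max) ↔
      blockMin P j < blockMax P i := by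
    rw [min_part, max_part]
    exact WithTop.coe_lt_coe (a := blockMax P i) (b := blockMin P j)
  simp only [NonOverlappingPartition, mem_parts_iff_exists_part_eq, forall_exists_index,
    forall_apply_eq_imp_iff, hcross]
  simp only [min_part, max_part, WithTop.coe_lt_coe, WithBot.coe_lt_coe]

theorem stronglyMonotonePartition_iff_closesInOrder :
    StronglyMonotonePartition P ↔ ClosesInOrder P (· ≤ ·) := by
  rw [stronglyMonotonePartition_iff_blockMin_lt]
  constructor
  · intro h i j _ hmax
    by_contra! hmin
    exact (h j i hmin).not_ge hmax
  · intro h i j hmin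
    by_contra! hmax
    have hopen : blockMin P i < blockMax P j :=
      hmin.trans_le ((blockMin_le P j).trans (le_blockMax P j))
    exact hmin.not_ge (h j i hopen hmax)

theorem nonOverlappingPartition_iff_closesInOrder :
    NonOverlappingPartition P ↔ ClosesInOrder P (· ≥ ·) := by
  rw [nonOverlappingPartition_iff_blockMin_lt]
  constructor
  · intro h i j hopen hmax
    by_contra! hmin
    have hne : blockMax P i ≠ blockMax P j := fun he =>
      hmin.ne (blockMin_eq_blockMin_iff.2 (blockMax_eq_blockMax_iff.1 he))
    exact h i j ⟨hmin, hopen, hmax.lt_of_ne hne⟩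
  · rintro h i j ⟨hmin, hopen, hmax⟩
    exact hmin.not_ge (h i j hopen hmax.le)

end Families

section HistoryOf

variable {n : ℕ}

/-- The word of steps read off a partition: each element is put into its block, which is closed by
its greatest element. -/
def historyOf (P : Finpartition (univ : Finset (Fin n))) (i : Fin n) : ℕ × Bool :=
  ((blockMin P i).val, decide (blockMax P i = i))

variable {R : ℕ → ℕ → Prop} [DecidableRel R]

theorem mem_openAt_historyOf {P : Finpartition (univ : Finset (Fin n))} {t x : ℕ} :
    x ∈ openAt (historyOf P) t ↔
      ∃ i, (blockMin P i).val = x ∧ x < t ∧ t ≤ (blockMax P i).val := by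
  simp only [mem_openAt, historyOf, ne_eq, Prod.mk.injEq, decide_eq_true_eq, not_and]
  constructor
  · rintro ⟨hxt, ⟨i, -, hi⟩, hopen⟩
    refine ⟨i, hi, hxt, ?_⟩
    by_contra! hlt
    exact hopen (blockMax P i) hlt (by rw [blockMin_blockMax, hi]) (blockMax_blockMax P i)
  · rintro ⟨i, rfl, hlt, hle⟩
    refine ⟨hlt, ⟨blockMin P i, hlt, ?_⟩, fun u hut hmin hmax => ?_⟩
    · rw [blockMin_eq_blockMin_iff.2 (part_blockMin P i)]
    · have hblock := blockMin_eq_blockMin_iff.1 (Fin.ext hmin)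
      rw [← blockMax_eq_blockMax_iff.2 hblock, hmax] at hle
      exact hut.not_ge hle

theorem isHistory_historyOf_iff {P : Finpartition (univ : Finset (Fin n))} :
    IsHistory R (historyOf P) ↔ ClosesInOrder P fun i j => R i j := by
  simp only [IsHistory, mem_steps, mem_openAt_historyOf]
  constructor
  · intro h i j hopen hmax
    have hclose := (h (blockMax P i)).2
    simp only [historyOf, blockMax_blockMax, blockMin_blockMax, decide_true, forall_true_left]
      at hclose
    exact hclose _ ⟨j, rfl, hopen, hmax⟩
  · refine fun h t => ⟨?_, ?_⟩
    · exact (blockMin_le P t).eq_or_lt.imp (congrArg Fin.val) fun hlt =>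
        ⟨t, rfl, hlt, le_blockMax P t⟩
    · rintro hmax _ ⟨j, rfl, hopen, hle⟩
      have hmax : blockMax P t = t := of_decide_eq_true hmax
      exact h t j (by rwa [hmax]) (by rwa [hmax])

theorem openAt_historyOf_length (P : Finpartition (univ : Finset (Fin n))) :
    openAt (historyOf P) n = ∅ := by
  ext x
  simp [mem_openAt_historyOf]

theorem historyOf_injective : Function.Injective (historyOf (n := n)) := by
  intro P Q h
  have hmin (i : Fin n) : blockMin P i = blockMin Q i :=
    Fin.ext (congrArg Prod.fst (congrFun h i))
  have hpart (i : Fin n) : P.part i = Q.part i := by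
    ext j
    rw [mem_part_iff, mem_part_iff, ← blockMin_eq_blockMin_iff, ← blockMin_eq_blockMin_iff, hmin,
      hmin]
  apply Finpartition.ext
  ext A
  simp only [mem_parts_iff_exists_part_eq, hpart]

theorem IsHistory.exists_historyOf_eq {s : Fin n → ℕ × Bool} (hs : IsHistory R s)
    (hclosed : openAt s n = ∅) :
    ∃ P : Finpartition (univ : Finset (Fin n)), historyOf P = s := by
  classical
  let P := Finpartition.ofSetoid (Setoid.ker fun i => (s i).1)
  have hpart {i j : Fin n} : j ∈ P.part i ↔ (s i).1 = (s j).1 :=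
    Finpartition.mem_part_ofSetoid_iff_rel
  refine ⟨P, funext fun t => Prod.ext ?_ (Bool.eq_iff_iff.2 ?_)⟩
  · have hleast : IsLeast (P.part t : Set (Fin n)) ⟨(s t).1, (hs.label_le t).trans_lt t.2⟩ :=
      ⟨hpart.2 (hs.label_label t).symm, fun j hj => (hpart.1 hj).trans_le (hs.label_le j)⟩
    exact congrArg Fin.val ((isLeast_blockMin P t).unique hleast)
  · obtain ⟨u, hu⟩ := hs.exists_closing_step hclosed t
    have hgreatest : IsGreatest (P.part t : Set (Fin n)) u := by
      refine ⟨hpart.2 (by rw [hu]), fun j hj => ?_⟩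
      by_contra! huj
      exact hs.label_ne_of_closed huj (by rw [hu]) (by rw [hu, hpart.1 hj])
    have hmax : blockMax P t = u := (isGreatest_blockMax P t).unique hgreatest
    simp only [historyOf, hmax, decide_eq_true_eq]
    refine ⟨fun h => by rw [← h, hu], fun ht => ?_⟩
    have htu : t ≤ u := hmax ▸ le_blockMax P t
    refine (htu.eq_or_lt.resolve_right fun hlt => ?_).symm
    exact hs.label_ne_of_closed hlt ht (by rw [hu])

theorem card_closesInOrder_eq_card_histories (R : ℕ → ℕ → Prop) [DecidableRel R] (n : ℕ) :
    Nat.card {P : Finpartition (univ : Finset (Fin n)) // ClosesInOrder P fun i j => R i j} =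
      #{s ∈ histories R n | openAt s n = ∅} := by
  have himage : SetLike.coe {s ∈ histories R n | openAt s n = ∅} =
      historyOf '' {P | ClosesInOrder P fun i j => R i j} := by
    ext s
    simp only [coe_filter, mem_histories, Set.mem_ofPred_eq, Set.mem_image]
    constructor
    · rintro ⟨hs, hclosed⟩
      obtain ⟨P, rfl⟩ := hs.exists_historyOf_eq hclosed
      exact ⟨P, isHistory_historyOf_iff.1 hs, rfl⟩
    · rintro ⟨P, hP, rfl⟩
      exact ⟨isHistory_historyOf_iff.2 hP, openAt_historyOf_length P⟩
  rw [← Set.ncard_coe_finset, himage, Set.ncard_image_of_injective _ historyOf_injective]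
  rfl

end HistoryOf

theorem a_eq_motzkinWeight (n : ℕ) : a n = motzkinWeight (fun h => max h 1) 1 n 0 := by
  have hb (t : ℕ) (o : Finset ℕ) (ho : ∀ x ∈ o, x < t) :
      max #o 1 = #o + if ∀ x ∈ o, t ≤ x then 1 else 0 := by
    rcases o.eq_empty_or_nonempty with rfl | ⟨x, hx⟩
    · simp
    · have hnot : ¬ ∀ x ∈ o, t ≤ x := fun h => (ho x hx).not_ge (h x hx)
      rw [if_neg hnot, add_zero, max_eq_left (card_pos.2 ⟨x, hx⟩)]
  rw [← card_closed_histories hb, ← card_closesInOrder_eq_card_histories]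
  exact Nat.card_congr <|
    Equiv.subtypeEquivRight fun _ => stronglyMonotonePartition_iff_closesInOrder

theorem bessel_eq_motzkinWeight (n : ℕ) : bessel n = motzkinWeight (fun h => h + 1) 1 n 0 := by
  have hb (t : ℕ) (o : Finset ℕ) (ho : ∀ x ∈ o, x < t) :
      #o + 1 = #o + if ∀ x ∈ o, t ≥ x then 1 else 0 := by
    rw [if_pos fun x hx => (ho x hx).le]
  rw [← card_closed_histories hb, ← card_closesInOrder_eq_card_histories]
  exact Nat.card_congr <|
    Equiv.subtypeEquivRight fun _ => nonOverlappingPartition_iff_closesInOrder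

theorem mk_a_eq : PowerSeries.mk a = 1 + PowerSeries.X * (PowerSeries.mk a +
    PowerSeries.X * (PowerSeries.mk bessel * PowerSeries.mk a)) := by
  have ha : (motzkinWeight (fun h => max h 1) 1 · 0) = a :=
    funext fun n => (a_eq_motzkinWeight n).symm
  have hbessel : (motzkinWeight (fun h => max (h + 1) 1) 1 · 0) = bessel := by
    funext n
    simp only [bessel_eq_motzkinWeight, le_add_iff_nonneg_left, zero_le, sup_of_le_left]
  have hone : (fun i => (1 : ℕ → ℕ) (i + 1)) = 1 := rfl
  have hfirstReturn := mk_motzkinWeight_zero_eq (fun h => max h 1) (1 : ℕ → ℕ)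
  simp only [ha, hone, hbessel, zero_le, sup_of_le_right] at hfirstReturn
  simpa only [Pi.one_apply, map_one, one_mul] using hfirstReturn

end PartitionHistory

open PowerSeries in
theorem stmt17 :
    (PowerSeries.mk fun n => (a n : ℚ)) *
      (1 - PowerSeries.X - PowerSeries.X ^ 2 * PowerSeries.mk fun n => (bessel n : ℚ)) = 1 := by
  have hmap (f : ℕ → ℕ) : map (Nat.castRingHom ℚ) (mk f) = mk fun n => (f n : ℚ) := by
    ext n
    simp
  have hrat := congrArg (map (Nat.castRingHom ℚ)) PartitionHistory.mk_a_eq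
  simp only [map_add, map_mul, map_one, map_X, hmap] at hrat
  linear_combination hrat
end
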